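/- arXiv:2212.06670 — 4 statements merged into one kernel-verified Lean document; each statement's English description precedes it below -/
import Mathlib

section
/- Let (W, S) be a Coxeter system with Bruhat order ≤. For any x, y ∈ W, the set {x'·y' : x' ≤ x, y' ≤ y} contains a unique maximal element with respect to the Bruhat order; moreover this element equals the unique maximal element of {x·y' : y' ≤ y} and the unique maximal element of {x'·y : x' ≤ x}. -/
namespace CoxeterSystem

variable {B W : Type*} [Group W] {M : CoxeterMatrix B} (cs : CoxeterSystem M W)

/-- The Bruhat order on a Coxeter group, defined by the subword property:
`u ≤ v` if and only if some reduced word for `u` is a subword of some reduced word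
for `v`. -/
def BruhatLE (u v : W) : Prop :=
  ∃ ω ω' : List B, cs.IsReduced ω' ∧ v = cs.wordProd ω' ∧
    ω.Sublist ω' ∧ cs.IsReduced ω ∧ u = cs.wordProd ω

end CoxeterSystem

namespace CoxeterSystem

variable {B W : Type*} [Group W] {M : CoxeterMatrix B} (cs : CoxeterSystem M W)

/-! ### The strong exchange property -/

theorem end_one_apply {α : Type*} (a : α) : (1 : Function.End α) a = a := rfl

theorem end_mul_apply {α : Type*} (f g : Function.End α) (a : α) : (f * g) a = f (g a) := rfl

open Classical in
/-- The action of a simple reflection on pairs `(t, ε)`: it conjugates `t`, and flips `ε`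
exactly when `t` is that simple reflection. -/
noncomputable def signedConj (i : B) : Function.End (W × ZMod 2) :=
  fun p ↦ (cs.simple i * p.1 * cs.simple i, p.2 + if p.1 = cs.simple i then 1 else 0)

open Classical in
theorem signedConj_mul_pow_apply (i j : B) (n : ℕ) (t : W) (ε : ZMod 2) :
    ((cs.signedConj i * cs.signedConj j) ^ n) (t, ε) =
      ((cs.simple i * cs.simple j) ^ n * t * (cs.simple j * cs.simple i) ^ n,
        ε + ∑ k ∈ Finset.range (2 * n),
          if t = (cs.simple j * cs.simple i) ^ k * cs.simple j then 1 else 0) := by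
  set a := cs.simple i with ha
  set b := cs.simple j with hb
  have haa : a * a = 1 := cs.simple_mul_simple_self i
  have hbb : b * b = 1 := cs.simple_mul_simple_self j
  have hbb' (z : W) : b * (b * z) = z := cs.simple_mul_simple_cancel_left j
  have hinv : (b * a)⁻¹ = a * b := by
    rw [mul_inv_rev, inv_eq_of_mul_eq_one_right haa, inv_eq_of_mul_eq_one_right hbb]
  have hcancel (n : ℕ) : (a * b) ^ n = ((b * a) ^ n)⁻¹ := by rw [← inv_pow, hinv]
  have hcomm (n : ℕ) : b * (a * b) ^ n = (b * a) ^ n * b := by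
    have h : SemiconjBy b (a * b) (b * a) := by simp [SemiconjBy, mul_assoc]
    exact (h.pow_right n).eq
  induction n with
  | zero => simp [end_one_apply]
  | succ n ih =>
    have hconj (z : W) :
        (a * b) ^ n * t * (b * a) ^ n = z ↔ t = (b * a) ^ n * z * (a * b) ^ n := by
      rw [hcancel, mul_assoc, inv_mul_eq_iff_eq_mul, eq_mul_inv_iff_mul_eq]
    have h₁ : (a * b) ^ n * t * (b * a) ^ n = b ↔ t = (b * a) ^ (2 * n) * b := by
      rw [hconj, mul_assoc, hcomm, ← mul_assoc, ← pow_add, two_mul]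
    have hswap (z : W) : b * z * b = a ↔ z = b * a * b := by
      constructor <;> intro h
      · simp [← h, mul_assoc, hbb, hbb']
      · simp [h, mul_assoc, hbb, hbb']
    have h₂ : b * ((a * b) ^ n * t * (b * a) ^ n) * b = a ↔
        t = (b * a) ^ (2 * n + 1) * b := by
      rw [hswap, hconj, mul_assoc, mul_assoc (b * a), hcomm, ← mul_assoc, ← mul_assoc,
        ← pow_succ, ← pow_add, add_right_comm, two_mul]
    rw [pow_succ', end_mul_apply, ih, end_mul_apply, signedConj, signedConj, ← ha, ← hb]
    simp only [h₁, h₂]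
    refine Prod.ext ?_ ?_
    · simp only [pow_succ', mul_assoc]
      rw [← pow_succ, ← mul_assoc b a, ← pow_succ', pow_succ]
    · rw [show 2 * (n + 1) = 2 * n + 1 + 1 by ring, Finset.sum_range_succ,
        Finset.sum_range_succ]
      simp only [add_assoc]

theorem isLiftable_signedConj : M.IsLiftable cs.signedConj := by
  classical
  intro i j
  funext ⟨t, ε⟩
  rw [signedConj_mul_pow_apply, two_mul, Finset.sum_range_add]
  simp only [pow_add, simple_mul_simple_pow, simple_mul_simple_pow', one_mul, mul_one]
  rw [CharTwo.add_self_eq_zero, add_zero]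
  rfl

open Classical in
theorem lift_signedConj_wordProd (ω : List B) (t : W) (ε : ZMod 2) :
    cs.lift ⟨cs.signedConj, cs.isLiftable_signedConj⟩ (cs.wordProd ω) (t, ε) =
      (cs.wordProd ω * t * (cs.wordProd ω)⁻¹, ε + ((cs.rightInvSeq ω).count t : ZMod 2)) := by
  induction ω with
  | nil => simp [end_one_apply]
  | cons i ω ih =>
    rw [wordProd_cons, map_mul, end_mul_apply, ih,
      lift_apply_simple, signedConj, rightInvSeq, List.count_cons]
    have h : cs.wordProd ω * t * (cs.wordProd ω)⁻¹ = cs.simple i ↔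
        (cs.wordProd ω)⁻¹ * cs.simple i * cs.wordProd ω = t := by
      rw [mul_inv_eq_iff_eq_mul, mul_assoc, inv_mul_eq_iff_eq_mul, eq_comm]
    refine Prod.ext ?_ ?_
    · simp [mul_assoc]
    · simp [h, add_assoc]

/-- The parity of the multiplicity of `t` in the right inversion sequence of a word for `w`. -/
noncomputable def inversionParity (w t : W) : ZMod 2 :=
  (cs.lift ⟨cs.signedConj, cs.isLiftable_signedConj⟩ w (t, 0)).2

open Classical in
theorem inversionParity_wordProd (ω : List B) (t : W) :
    cs.inversionParity (cs.wordProd ω) t = ((cs.rightInvSeq ω).count t : ZMod 2) := by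
  simp [inversionParity, lift_signedConj_wordProd]

theorem inversionParity_mul (u v t : W) :
    cs.inversionParity (u * v) t =
      cs.inversionParity u (v * t * v⁻¹) + cs.inversionParity v t := by
  classical
  obtain ⟨ω, rfl⟩ := cs.wordProd_surjective u
  obtain ⟨ω', rfl⟩ := cs.wordProd_surjective v
  rw [inversionParity, map_mul, end_mul_apply,
    lift_signedConj_wordProd, lift_signedConj_wordProd, inversionParity_wordProd,
    inversionParity_wordProd, zero_add, add_comm]

theorem inversionParity_simple_self (i : B) :
    cs.inversionParity (cs.simple i) (cs.simple i) = 1 := by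
  classical
  rw [← wordProd_singleton, inversionParity_wordProd]
  simp

theorem IsReflection.inversionParity_self {t : W} (ht : cs.IsReflection t) :
    cs.inversionParity t t = 1 := by
  classical
  obtain ⟨w, i, rfl⟩ := ht
  have hone : cs.inversionParity (w * w⁻¹) (w * cs.simple i * w⁻¹) = 0 := by
    rw [mul_inv_cancel, ← wordProd_nil, inversionParity_wordProd]
    simp
  have hconj : w⁻¹ * (w * cs.simple i * w⁻¹) * w⁻¹⁻¹ = cs.simple i := by group
  rw [inversionParity_mul, hconj] at hone
  rw [inversionParity_mul, hconj, inversionParity_mul, inversionParity_simple_self,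
    mul_inv_cancel_right, add_right_comm, hone, zero_add]

theorem length_mul_lt_of_inversionParity_ne_zero {w t : W} (h : cs.inversionParity w t ≠ 0) :
    cs.length (w * t) < cs.length w := by
  classical
  obtain ⟨ω, hω, rfl⟩ := cs.exists_isReduced w
  rw [inversionParity_wordProd] at h
  refine (cs.isRightInversion_of_mem_rightInvSeq hω ?_).2
  by_contra hmem
  exact h (by rw [List.count_eq_zero_of_not_mem hmem, Nat.cast_zero])

/-- **Strong exchange property.** -/
theorem mem_rightInvSeq_of_length_mul_lt {ω : List B} {t : W} (ht : cs.IsReflection t)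
    (hlt : cs.length (cs.wordProd ω * t) < cs.length (cs.wordProd ω)) :
    t ∈ cs.rightInvSeq ω := by
  classical
  by_contra hmem
  have hzero : cs.inversionParity (cs.wordProd ω) t = 0 := by
    rw [inversionParity_wordProd, List.count_eq_zero_of_not_mem hmem, Nat.cast_zero]
  have hne : cs.inversionParity (cs.wordProd ω * t) t ≠ 0 := by
    rw [inversionParity_mul, mul_inv_cancel_right, hzero, ht.inversionParity_self]
    simp
  have := cs.length_mul_lt_of_inversionParity_ne_zero hne
  rw [mul_assoc, ht.mul_self, mul_one] at this
  omega

theorem exists_wordProd_eraseIdx_of_length_mul_lt {ω : List B} {t : W} (ht : cs.IsReflection t)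
    (hlt : cs.length (cs.wordProd ω * t) < cs.length (cs.wordProd ω)) :
    ∃ k < ω.length, cs.wordProd ω * t = cs.wordProd (ω.eraseIdx k) := by
  obtain ⟨k, hk, rfl⟩ := List.mem_iff_getElem.mp (cs.mem_rightInvSeq_of_length_mul_lt ht hlt)
  refine ⟨k, by simpa using hk, ?_⟩
  rw [← wordProd_mul_getD_rightInvSeq, List.getD_eq_getElem _ _ hk]

/-! ### The Bruhat order as the closure of length-increasing reflections -/

/-- `v` is obtained from `u` by multiplying with a reflection that increases the length. -/
def BruhatStep (u v : W) : Prop :=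
  ∃ t, cs.IsReflection t ∧ v = u * t ∧ cs.length u < cs.length v

/-- The reflexive and transitive closure of `BruhatStep`. -/
def BruhatChain : W → W → Prop := Relation.ReflTransGen cs.BruhatStep

/-- The longer one of `w` and `w * cs.simple i`. -/
noncomputable def mulMax (w : W) (i : B) : W :=
  if cs.length w < cs.length (w * cs.simple i) then w * cs.simple i else w

variable {cs}

theorem BruhatChain.length_le {u v : W} (h : cs.BruhatChain u v) :
    cs.length u ≤ cs.length v := by
  induction h with
  | refl => exact le_rfl
  | tail _ h ih =>
    obtain ⟨t, -, -, hlt⟩ := h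
    exact ih.trans hlt.le

theorem BruhatChain.antisymm {u v : W} (h : cs.BruhatChain u v) (h' : cs.BruhatChain v u) :
    u = v := by
  rcases Relation.ReflTransGen.cases_tail h with rfl | ⟨w, huw, t, -, -, hlt⟩
  · rfl
  · have h₁ := BruhatChain.length_le huw
    have h₂ := h'.length_le
    omega

variable (cs)

theorem bruhatChain_mulMax (w : W) (i : B) : cs.BruhatChain w (cs.mulMax w i) := by
  rw [mulMax]
  split_ifs with h
  · exact .single ⟨_, cs.isReflection_simple i, rfl, h⟩
  · exact .refl

theorem bruhatChain_mul_simple_mulMax (w : W) (i : B) :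
    cs.BruhatChain (w * cs.simple i) (cs.mulMax w i) := by
  rw [mulMax]
  split_ifs with h
  · exact .refl
  · refine .single ⟨_, cs.isReflection_simple i, by simp, ?_⟩
    have := cs.length_mul_simple_ne w i
    omega

variable {cs}

theorem BruhatStep.bruhatChain_mul_simple {u v : W} (h : cs.BruhatStep u v) (i : B) :
    cs.BruhatChain (u * cs.simple i) (cs.mulMax v i) := by
  obtain ⟨t, ht, hv, hlt⟩ := h
  have hu : u = v * t := by rw [hv, mul_assoc, ht.mul_self, mul_one]
  have ht' : cs.IsReflection (cs.simple i * t * cs.simple i) := by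
    simpa using ht.conj (cs.simple i)
  have hvi : v * cs.simple i = u * cs.simple i * (cs.simple i * t * cs.simple i) := by
    simp [hv, mul_assoc]
  by_cases hlt' : cs.length (u * cs.simple i) < cs.length (v * cs.simple i)
  · exact .head ⟨_, ht', hvi, hlt'⟩ (cs.bruhatChain_mul_simple_mulMax v i)
  · have hne : cs.length (v * cs.simple i) ≠ cs.length (u * cs.simple i) := by
      rw [hvi]
      exact ht'.length_mul_left_ne _
    have hlu := cs.length_mul_simple u i
    have hlv := cs.length_mul_simple v i
    obtain ⟨α, hα, hvα⟩ := cs.exists_isReduced (v * cs.simple i)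
    have hv' : v = cs.wordProd (α ++ [i]) := by
      rw [wordProd_append, wordProd_singleton, ← hvα, simple_mul_simple_cancel_right]
    have hα' : α.length = cs.length (v * cs.simple i) := by rw [hvα, hα.eq]
    rw [hu, hv'] at hlt
    obtain ⟨k, hk, hk'⟩ := cs.exists_wordProd_eraseIdx_of_length_mul_lt ht hlt
    rw [← hv', ← hu] at hk'
    rcases Nat.lt_or_ge k α.length with hkα | hkα
    · rw [List.eraseIdx_append_of_lt_length hkα, wordProd_append, wordProd_singleton] at hk'
      have hle := cs.length_wordProd_le (α.eraseIdx k)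
      have hlen := List.length_eraseIdx_add_one hkα
      rw [hk', simple_mul_simple_cancel_right] at hlt' hne
      omega
    · have hk0 : k - α.length = 0 := by simp at hk; omega
      rw [List.eraseIdx_append_of_length_le hkα, hk0] at hk'
      simp only [List.eraseIdx_zero, List.tail_cons, List.append_nil] at hk'
      rw [hk', ← hvα, simple_mul_simple_cancel_right]
      exact cs.bruhatChain_mulMax v i

theorem BruhatChain.mul_simple_mulMax {u v : W} (h : cs.BruhatChain u v) (i : B) :
    cs.BruhatChain (u * cs.simple i) (cs.mulMax v i) := by
  induction h with
  | refl => exact cs.bruhatChain_mul_simple_mulMax u i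
  | @tail w v _ hwv ih =>
    refine ih.trans ?_
    rw [mulMax]
    split_ifs
    · exact hwv.bruhatChain_mul_simple i
    · exact .head hwv (cs.bruhatChain_mulMax v i)

theorem bruhatChain_foldl_mulMax_of_sublist {x x' : W} (hx : cs.BruhatChain x' x)
    {ω ω' : List B} (h : ω.Sublist ω') :
    cs.BruhatChain (x' * cs.wordProd ω) (ω'.foldl cs.mulMax x) := by
  induction h generalizing x x' with
  | slnil => simpa
  | cons i _ ih => exact ih (hx.trans (cs.bruhatChain_mulMax x i))
  | cons_cons i _ ih =>
    rw [wordProd_cons, ← mul_assoc]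
    exact ih (hx.mul_simple_mulMax i)

variable (cs)

theorem exists_sublist_foldl_mulMax (x : W) (ω : List B) :
    ∃ ω' : List B, ω'.Sublist ω ∧ ω.foldl cs.mulMax x = x * cs.wordProd ω' := by
  induction ω generalizing x with
  | nil => exact ⟨[], .refl _, by simp⟩
  | cons i ω ih =>
    obtain ⟨ω', hsub, heq⟩ := ih (cs.mulMax x i)
    rw [List.foldl_cons, heq, mulMax]
    split_ifs
    · exact ⟨i :: ω', hsub.cons_cons i, by rw [wordProd_cons, mul_assoc]⟩
    · exact ⟨ω', hsub.cons i, rfl⟩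

variable {cs}

theorem IsReduced.foldl_mulMax_append {α β : List B} (h : cs.IsReduced (α ++ β)) :
    β.foldl cs.mulMax (cs.wordProd α) = cs.wordProd (α ++ β) := by
  induction β generalizing α with
  | nil => simp
  | cons i β ih =>
    have happ : α ++ i :: β = (α ++ [i]) ++ β := by simp
    rw [happ] at h
    have hi : cs.IsReduced (α ++ [i]) := by
      simpa only [List.take_left] using h.take (α ++ [i]).length
    have hmax : cs.mulMax (cs.wordProd α) i = cs.wordProd (α ++ [i]) := by
      have hle := cs.length_wordProd_le α
      have heq := hi.eq
      rw [wordProd_append, wordProd_singleton, List.length_append, List.length_singleton] at heq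
      rw [mulMax, if_pos (by omega), wordProd_append, wordProd_singleton]
    rw [List.foldl_cons, hmax, ih h, happ]

theorem IsReduced.bruhatChain_of_sublist {ω ω' : List B} (hω' : cs.IsReduced ω')
    (h : ω.Sublist ω') : cs.BruhatChain (cs.wordProd ω) (cs.wordProd ω') := by
  have hfold : ω'.foldl cs.mulMax 1 = cs.wordProd ω' := by
    simpa using IsReduced.foldl_mulMax_append (α := []) hω'
  simpa [hfold] using
    bruhatChain_foldl_mulMax_of_sublist (cs := cs) (x' := 1) .refl h

variable (cs)

/-- **Deletion property.** Every word contains a reduced word for the same element. -/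
theorem exists_isReduced_sublist (ω : List B) :
    ∃ ω' : List B, ω'.Sublist ω ∧ cs.IsReduced ω' ∧ cs.wordProd ω' = cs.wordProd ω := by
  induction ω using List.reverseRecOn with
  | nil => exact ⟨[], .refl _, by simp [IsReduced], rfl⟩
  | append_singleton ω i ih =>
    obtain ⟨α, hsub, hα, hprod⟩ := ih
    have hlen := cs.length_mul_simple (cs.wordProd α) i
    have hred := hα.eq
    rw [wordProd_append, wordProd_singleton, ← hprod]
    by_cases hlt : cs.length (cs.wordProd α * cs.simple i) < cs.length (cs.wordProd α)
    · obtain ⟨k, hk, heq⟩ :=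
        cs.exists_wordProd_eraseIdx_of_length_mul_lt (cs.isReflection_simple i) hlt
      refine ⟨α.eraseIdx k, ((List.eraseIdx_sublist α k).trans hsub).trans
        (List.sublist_append_left ω [i]), ?_, heq.symm⟩
      have := List.length_eraseIdx_add_one hk
      rw [IsReduced, ← heq]
      omega
    · refine ⟨α ++ [i], hsub.append (.refl _), ?_, by rw [wordProd_append, wordProd_singleton]⟩
      rw [IsReduced, wordProd_append, wordProd_singleton, List.length_append,
        List.length_singleton]
      omega

variable {cs}

theorem BruhatChain.exists_sublist {u : W} {ω : List B}
    (h : cs.BruhatChain u (cs.wordProd ω)) :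
    ∃ ω' : List B, ω'.Sublist ω ∧ cs.IsReduced ω' ∧ u = cs.wordProd ω' := by
  induction h using Relation.ReflTransGen.head_induction_on with
  | refl =>
    obtain ⟨ω', hsub, hred, heq⟩ := cs.exists_isReduced_sublist ω
    exact ⟨ω', hsub, hred, heq.symm⟩
  | @head u w huw _ ih =>
    obtain ⟨α, hsub, -, rfl⟩ := ih
    obtain ⟨t, ht, hw, hlt⟩ := huw
    have hu : u = cs.wordProd α * t := by rw [hw, mul_assoc, ht.mul_self, mul_one]
    rw [hu] at hlt
    obtain ⟨k, -, heq⟩ := cs.exists_wordProd_eraseIdx_of_length_mul_lt ht hlt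
    obtain ⟨ω', hsub', hred, heq'⟩ := cs.exists_isReduced_sublist (α.eraseIdx k)
    exact ⟨ω', (hsub'.trans (List.eraseIdx_sublist α k)).trans hsub, hred, by
      rw [hu, heq, heq']⟩

theorem bruhatLE_iff_bruhatChain {u v : W} : cs.BruhatLE u v ↔ cs.BruhatChain u v := by
  constructor
  · rintro ⟨ω, ω', hω', rfl, hsub, -, rfl⟩
    exact hω'.bruhatChain_of_sublist hsub
  · intro h
    obtain ⟨ω, hω, rfl⟩ := cs.exists_isReduced v
    obtain ⟨ω', hsub, hω', rfl⟩ := h.exists_sublist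
    exact ⟨ω', ω, hω, rfl, hsub, hω', rfl⟩

theorem BruhatLE.refl (u : W) : cs.BruhatLE u u := bruhatLE_iff_bruhatChain.mpr .refl

theorem BruhatLE.antisymm {u v : W} (h : cs.BruhatLE u v) (h' : cs.BruhatLE v u) : u = v :=
  (bruhatLE_iff_bruhatChain.mp h).antisymm (bruhatLE_iff_bruhatChain.mp h')

theorem BruhatLE.inv {u v : W} (h : cs.BruhatLE u v) : cs.BruhatLE u⁻¹ v⁻¹ := by
  obtain ⟨ω, ω', hω', rfl, hsub, hω, rfl⟩ := h
  exact ⟨ω.reverse, ω'.reverse, hω'.reverse, by simp, hsub.reverse, hω.reverse, by simp⟩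

variable (cs)

/-! ### The Demazure product -/

theorem exists_greatest_mul_right (x y : W) :
    ∃ m y' : W, cs.BruhatLE y' y ∧ m = x * y' ∧
      ∀ x' y' : W, cs.BruhatLE x' x → cs.BruhatLE y' y → cs.BruhatLE (x' * y') m := by
  obtain ⟨ω, hω, rfl⟩ := cs.exists_isReduced y
  obtain ⟨ω', hsub, heq⟩ := cs.exists_sublist_foldl_mulMax x ω
  refine ⟨ω.foldl cs.mulMax x, cs.wordProd ω',
    bruhatLE_iff_bruhatChain.mpr (hω.bruhatChain_of_sublist hsub), heq, fun x' y' hx hy ↦ ?_⟩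
  obtain ⟨α, hα, -, rfl⟩ := (bruhatLE_iff_bruhatChain.mp hy).exists_sublist
  exact bruhatLE_iff_bruhatChain.mpr
    (bruhatChain_foldl_mulMax_of_sublist (bruhatLE_iff_bruhatChain.mp hx) hα)

theorem exists_greatest_mul_left (x y : W) :
    ∃ m x' : W, cs.BruhatLE x' x ∧ m = x' * y ∧
      ∀ x' y' : W, cs.BruhatLE x' x → cs.BruhatLE y' y → cs.BruhatLE (x' * y') m := by
  obtain ⟨m, z, hz, rfl, hmax⟩ := cs.exists_greatest_mul_right y⁻¹ x⁻¹
  refine ⟨z⁻¹ * y, z⁻¹, by simpa using hz.inv, rfl, fun x' y' hx hy ↦ ?_⟩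
  simpa using (hmax _ _ hy.inv hx.inv).inv

end CoxeterSystem

/-- For any `x, y` in a Coxeter group, the set
`{x'·y' : x' ≤ x, y' ≤ y}` contains a unique maximal element with respect to the Bruhat
order, and this element is the unique maximal element of `{x·y' : y' ≤ y}` and of
`{x'·y : x' ≤ x}` as well (the Demazure product of `x` and `y`). -/
theorem demazure_product_exists_unique {B W : Type*} [Group W] {M : CoxeterMatrix B}
    (cs : CoxeterSystem M W) (x y : W) :
    ∃ m : W,
      -- `m` is the greatest element of `{x'·y' : x' ≤ x, y' ≤ y}` ...
      ((∃ x' y' : W, cs.BruhatLE x' x ∧ cs.BruhatLE y' y ∧ m = x' * y') ∧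
        (∀ z : W, (∃ x' y' : W, cs.BruhatLE x' x ∧ cs.BruhatLE y' y ∧ z = x' * y') →
          cs.BruhatLE z m) ∧
        -- ... and the unique maximal element of that set ...
        (∀ z : W, (∃ x' y' : W, cs.BruhatLE x' x ∧ cs.BruhatLE y' y ∧ z = x' * y') →
          (∀ z' : W, (∃ x' y' : W, cs.BruhatLE x' x ∧ cs.BruhatLE y' y ∧ z' = x' * y') →
            cs.BruhatLE z z' → z = z') → z = m)) ∧
      -- `m` is the greatest and unique maximal element of `{x·y' : y' ≤ y}` ...
      ((∃ y' : W, cs.BruhatLE y' y ∧ m = x * y') ∧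
        (∀ z : W, (∃ y' : W, cs.BruhatLE y' y ∧ z = x * y') → cs.BruhatLE z m) ∧
        (∀ z : W, (∃ y' : W, cs.BruhatLE y' y ∧ z = x * y') →
          (∀ z' : W, (∃ y' : W, cs.BruhatLE y' y ∧ z' = x * y') →
            cs.BruhatLE z z' → z = z') → z = m)) ∧
      -- ... and of `{x'·y : x' ≤ x}`.
      ((∃ x' : W, cs.BruhatLE x' x ∧ m = x' * y) ∧
        (∀ z : W, (∃ x' : W, cs.BruhatLE x' x ∧ z = x' * y) → cs.BruhatLE z m) ∧
        (∀ z : W, (∃ x' : W, cs.BruhatLE x' x ∧ z = x' * y) →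
          (∀ z' : W, (∃ x' : W, cs.BruhatLE x' x ∧ z' = x' * y) →
            cs.BruhatLE z z' → z = z') → z = m)) := by
  obtain ⟨m, y₀, hy₀, hm, hmax⟩ := cs.exists_greatest_mul_right x y
  obtain ⟨m', x₀, hx₀, hm', hmax'⟩ := cs.exists_greatest_mul_left x y
  have hmm : m = m' := by
    refine CoxeterSystem.BruhatLE.antisymm (cs := cs) ?_ ?_
    · rw [hm]
      exact hmax' _ _ (.refl x) hy₀
    · rw [hm']
      exact hmax _ _ hx₀ (.refl y)
  rw [← hmm] at hm'
  refine ⟨m, ⟨⟨x, y₀, .refl x, hy₀, hm⟩, ?_, ?_⟩, ⟨⟨y₀, hy₀, hm⟩, ?_, ?_⟩,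
    ⟨⟨x₀, hx₀, hm'⟩, ?_, ?_⟩⟩
  · rintro _ ⟨x', y', hx, hy, rfl⟩
    exact hmax _ _ hx hy
  · rintro _ ⟨x', y', hx, hy, rfl⟩ h
    exact h m ⟨x, y₀, .refl x, hy₀, hm⟩ (hmax _ _ hx hy)
  · rintro _ ⟨y', hy, rfl⟩
    exact hmax _ _ (.refl x) hy
  · rintro _ ⟨y', hy, rfl⟩ h
    exact h m ⟨y₀, hy₀, hm⟩ (hmax _ _ (.refl x) hy)
  · rintro _ ⟨x', hx, rfl⟩
    exact hmax _ _ hx (.refl y)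
  · rintro _ ⟨x', hx, rfl⟩ h
    exact h m ⟨x₀, hx₀, hm'⟩ (hmax _ _ hx (.refl y))
end

section
/- In the Weyl group W of type A_n (the symmetric group on n+1 letters, with simple reflections s_1, …, s_n labeled as in Bourbaki), for every 1 ≤ i ≤ n one has w_{i,0}·w_0 = (s_1 s_2 ⋯ s_n)^i. -/
noncomputable section
open CoxeterMatrix

/-- The Weyl group of type `Aₙ`, given by its Coxeter presentation. -/
abbrev WA (n : ℕ) := (Aₙ n).Group

/-- The canonical Coxeter system of type `Aₙ`. -/
def csA (n : ℕ) : CoxeterSystem (Aₙ n) (WA n) := (Aₙ n).toCoxeterSystem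

/-- `segA n a b` is the product `s_a s_{a+1} ⋯ s_b` of the simple reflections with
Bourbaki labels `a, a+1, …, b` (so `s_j`, `1 ≤ j ≤ n`, is `(csA n).simple ⟨j-1, _⟩`). -/
def segA (n a b : ℕ) : WA n :=
  (((List.finRange n).filter fun k : Fin n => a ≤ (k : ℕ) + 1 ∧ (k : ℕ) + 1 ≤ b).map
    (csA n).simple).prod

/-- The standard parabolic subgroup of the type-`Aₙ` Weyl group generated by all simple
reflections except the one with (zero-based) index `i`. -/
def paraA (n : ℕ) (i : Fin n) : Subgroup (WA n) :=
  Subgroup.closure ((csA n).simple '' {j : Fin n | j ≠ i})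

/-- The adjacent transposition attached to the simple reflection with zero-based index `j`. -/
def adjSwap {n : ℕ} (j : Fin n) : Equiv.Perm ℕ := Equiv.swap (j : ℕ) (j + 1)

lemma adjSwap_apply {n : ℕ} (j : Fin n) (x : ℕ) :
    adjSwap j x = if x = j then (j : ℕ) + 1 else if x = j + 1 then (j : ℕ) else x :=
  Equiv.swap_apply_def _ _ _

lemma Aₙ_apply {n : ℕ} (j k : Fin n) :
    Aₙ n j k = if j = k then 1 else if (k : ℕ) + 1 = j ∨ (j : ℕ) + 1 = k then 3 else 2 :=
  rfl

lemma Aₙ_isLiftable_adjSwap (n : ℕ) :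
    (Aₙ n).IsLiftable (adjSwap : Fin n → Equiv.Perm ℕ) := by
  intro j k
  ext x
  rw [Aₙ_apply]
  split_ifs <;>
    simp only [pow_succ, pow_zero, one_mul, Equiv.Perm.mul_apply, adjSwap_apply,
      Equiv.Perm.one_apply, Fin.ext_iff] at * <;>
    grind

/-- The permutation action of the type-`Aₙ` Weyl group, extended to `ℕ` by fixed points. -/
def permRep (n : ℕ) : WA n →* Equiv.Perm ℕ :=
  (csA n).lift ⟨adjSwap, Aₙ_isLiftable_adjSwap n⟩

lemma permRep_simple {n : ℕ} (j : Fin n) : permRep n ((csA n).simple j) = adjSwap j :=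
  (csA n).lift_apply_simple (Aₙ_isLiftable_adjSwap n) j

lemma permRep_mul_simple_apply {n : ℕ} (w : WA n) (j : Fin n) (x : ℕ) :
    permRep n (w * (csA n).simple j) x =
      permRep n w (if x = j then (j : ℕ) + 1 else if x = j + 1 then (j : ℕ) else x) := by
  rw [map_mul, permRep_simple, Equiv.Perm.mul_apply, adjSwap_apply]

lemma simple_mul_comm {n : ℕ} {j k : Fin n} (h : Aₙ n j k = 2) :
    (csA n).simple j * (csA n).simple k = (csA n).simple k * (csA n).simple j := by
  have := (csA n).simple_mul_simple_pow j k
  rw [h, pow_two, mul_eq_one_iff_eq_inv] at this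
  simpa using this

lemma simple_braid {n : ℕ} {j k : Fin n} (h : Aₙ n j k = 3) :
    (csA n).simple j * (csA n).simple k * (csA n).simple j =
      (csA n).simple k * (csA n).simple j * (csA n).simple k := by
  have := (csA n).simple_mul_simple_pow j k
  rw [h, pow_three] at this
  rw [← mul_inv_eq_one]
  simpa only [mul_inv_rev, (csA n).inv_simple, mul_assoc] using this

/-- If `s_j` is not a right descent of `w`, then the permutation of `w` ascends at `j`. -/
lemma permRep_lt_of_not_isRightDescent {n : ℕ} (w : WA n) (j : Fin n)
    (hj : ¬ (csA n).IsRightDescent w j) : permRep n w j < permRep n w (j + 1) := by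
  induction hl : (csA n).length w using Nat.strong_induction_on generalizing w j with
  | _ l ih =>
  by_cases hw : w = 1
  · simp [hw]
  obtain ⟨k, hk⟩ := (csA n).exists_rightDescent_of_ne_one hw
  have hjk : j ≠ k := fun h => hj (h ▸ hk)
  rw [(csA n).not_isRightDescent_iff] at hj
  rw [(csA n).isRightDescent_iff] at hk
  obtain ⟨v, rfl⟩ : ∃ v, w = v * (csA n).simple k := ⟨w * (csA n).simple k, by simp⟩
  rw [(csA n).simple_mul_simple_cancel_right] at hk
  have hvk := ih _ (by omega) v k (by rw [(csA n).not_isRightDescent_iff]; omega) rfl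
  by_cases hadj : (j : ℕ) + 1 = k ∨ (k : ℕ) + 1 = j
  · have hbraid := simple_braid (j := j) (k := k) (by grind [Aₙ_apply])
    by_cases hvj : (csA n).IsRightDescent v j
    · rw [(csA n).isRightDescent_iff] at hvj
      obtain ⟨u, rfl⟩ : ∃ u, v = u * (csA n).simple j := ⟨v * (csA n).simple j, by simp⟩
      rw [(csA n).simple_mul_simple_cancel_right] at hvj
      have huj := ih _ (by omega) u j (by rw [(csA n).not_isRightDescent_iff]; omega) rfl
      have huk := ih _ (by omega) u k (by
        intro h
        rw [(csA n).isRightDescent_iff] at h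
        have h₁ := (csA n).length_mul_le (u * (csA n).simple k)
          ((csA n).simple j * (csA n).simple k)
        have h₂ := (csA n).length_mul_le ((csA n).simple j) ((csA n).simple k)
        have h₃ : u * (csA n).simple j * (csA n).simple k * (csA n).simple j =
            u * (csA n).simple k * ((csA n).simple j * (csA n).simple k) := by
          simpa [mul_assoc] using congrArg (u * ·) hbraid
        rw [(csA n).length_simple, (csA n).length_simple] at h₂
        rw [h₃] at hj
        omega) rfl
      simp only [permRep_mul_simple_apply] at *
      grind
    · have := ih _ (by omega) v j hvj rfl
      simp only [permRep_mul_simple_apply]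
      grind
  · have hcomm := simple_mul_comm (j := j) (k := k) (by grind [Aₙ_apply])
    have hv := ih _ (by omega) v j (by
      intro h
      rw [(csA n).isRightDescent_iff] at h
      have h₁ := (csA n).length_mul_le (v * (csA n).simple j) ((csA n).simple k)
      rw [mul_assoc, hcomm, ← mul_assoc, (csA n).length_simple] at h₁
      omega) rfl
    simp only [permRep_mul_simple_apply]
    grind

lemma permRep_lt_of_isRightDescent {n : ℕ} (w : WA n) (j : Fin n)
    (hj : (csA n).IsRightDescent w j) : permRep n w (j + 1) < permRep n w j := by
  have := permRep_lt_of_not_isRightDescent (w * (csA n).simple j) j (by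
    rw [(csA n).isRightDescent_iff] at hj
    rw [(csA n).not_isRightDescent_iff, (csA n).simple_mul_simple_cancel_right]
    exact hj.symm)
  rw [permRep_mul_simple_apply, permRep_mul_simple_apply] at this
  simpa using this

lemma permRep_injective (n : ℕ) : Function.Injective (permRep n) := by
  rw [injective_iff_map_eq_one]
  intro w hw
  by_contra hne
  obtain ⟨k, hk⟩ := (csA n).exists_rightDescent_of_ne_one hne
  have := permRep_lt_of_isRightDescent w k hk
  simp [hw] at this

lemma permRep_apply_of_lt {n : ℕ} (w : WA n) {x : ℕ} (hx : n < x) : permRep n w x = x := by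
  induction w using (csA n).simple_induction_right with
  | one => simp
  | mul_simple_right w j ih =>
    rw [permRep_mul_simple_apply]
    grind

lemma permRep_apply_le_iff {n : ℕ} (w : WA n) (x : ℕ) : permRep n w x ≤ n ↔ x ≤ n := by
  refine ⟨fun h => ?_, fun h => ?_⟩ <;> by_contra! hlt
  · rw [permRep_apply_of_lt w hlt] at h
    omega
  · have := (permRep n w).injective (permRep_apply_of_lt w hlt)
    omega

lemma permRep_apply_le_iff_of_mem_paraA {n : ℕ} {i : Fin n} {w : WA n} (hw : w ∈ paraA n i)
    (x : ℕ) : permRep n w x ≤ i ↔ x ≤ i := by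
  induction hw using Subgroup.closure_induction generalizing x with
  | mem w hw =>
    obtain ⟨j, hj, rfl⟩ := hw
    have : (j : ℕ) ≠ i := fun h => hj (Fin.ext h)
    rw [permRep_simple, adjSwap_apply]
    grind
  | one => simp
  | mul u v _ _ hu hv => rw [map_mul, Equiv.Perm.mul_apply, hu, hv]
  | inv u _ hu => rw [← hu, map_inv, ← Equiv.Perm.mul_apply, mul_inv_cancel, Equiv.Perm.one_apply]

/-- The involution of `ℕ` reversing the blocks `[0, i]` and `[i + 1, n]`. -/
def blockRev (n i k : ℕ) : ℕ := if k ≤ i then i - k else if k ≤ n then n + i + 1 - k else k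

/-- A permutation that preserves the blocks `[0, i]`, `[i + 1, n]` and fixes everything beyond,
and that descends inside each block, reverses both blocks. -/
lemma perm_eq_blockRev {n i : ℕ} (hi : i ≤ n) (σ : Equiv.Perm ℕ) (hσi : ∀ k, σ k ≤ i ↔ k ≤ i)
    (hσn : ∀ k, σ k ≤ n ↔ k ≤ n) (hfix : ∀ k, n < k → σ k = k)
    (hdesc : ∀ j < n, j ≠ i → σ (j + 1) < σ j) (k : ℕ) : σ k = blockRev n i k := by
  have hinv : ∀ k, blockRev n i (blockRev n i k) = k := by
    intro k
    simp only [blockRev]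
    grind
  have hmono : StrictMono fun k => σ (blockRev n i k) := by
    refine strictMono_nat_of_lt_succ fun k => ?_
    have h₁ := hσi 0
    have h₂ := hσi n
    have h₃ := hσn n
    have h₄ := hσn i
    rcases lt_trichotomy k i with h | rfl | h
    · have := hdesc (i - (k + 1)) (by omega) (by omega)
      rw [show i - (k + 1) + 1 = i - k by omega] at this
      simpa [blockRev, h, h.le, Nat.succ_le_of_lt h] using this
    · have := hfix (k + 1)
      simp only [blockRev]
      grind
    · have h₅ := hdesc (n + i + 1 - (k + 1))
      have h₆ := hfix (k + 1)
      have h₇ := hfix k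
      have h₈ := hσn (n + i + 1 - k)
      simp only [blockRev]
      grind
  have hsurj : Function.Surjective fun k => σ (blockRev n i k) :=
    σ.surjective.comp fun k => ⟨_, hinv k⟩
  have hid := congrArg (fun e : ℕ ≃o ℕ => e (blockRev n i k))
    (Subsingleton.elim (hmono.orderIsoOfSurjective _ hsurj) (OrderIso.refl ℕ))
  simpa [hinv] using hid

lemma adjSwap_finRange_prod_apply (n : ℕ) (x : ℕ) :
    ((List.finRange n).map adjSwap).prod x = if x < n then x + 1 else if x = n then 0 else x := by
  induction n generalizing x with
  | zero => simp
  | succ n ih =>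
    have : (adjSwap ∘ Fin.castSucc : Fin n → Equiv.Perm ℕ) = adjSwap := rfl
    rw [List.finRange_succ_last, List.map_append, List.map_map, this, List.prod_append,
      Equiv.Perm.mul_apply, ih]
    simp only [List.map_cons, List.map_nil, List.prod_singleton, adjSwap_apply, Fin.val_last]
    grind

lemma permRep_segA_apply (n x : ℕ) :
    permRep n (segA n 1 n) x = if x < n then x + 1 else if x = n then 0 else x := by
  have hfilter : ((List.finRange n).filter fun k : Fin n =>
      1 ≤ (k : ℕ) + 1 ∧ (k : ℕ) + 1 ≤ n) = List.finRange n := by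
    rw [List.filter_eq_self]
    intro k _
    simp
  have hmap : (permRep n ∘ (csA n).simple) = adjSwap := funext permRep_simple
  rw [segA, hfilter, map_list_prod, List.map_map, hmap, adjSwap_finRange_prod_apply]

lemma permRep_segA_pow_apply {n m x : ℕ} (hm : m ≤ n) (hx : x ≤ n) :
    permRep n (segA n 1 n ^ m) x = if x + m ≤ n then x + m else x + m - (n + 1) := by
  induction m with
  | zero => simp [hx]
  | succ m ih =>
    rw [pow_succ', map_mul, Equiv.Perm.mul_apply, ih (by omega), permRep_segA_apply]
    grind

/-- In the Weyl group of type `Aₙ` (Bourbaki labels), for every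
`1 ≤ i ≤ n` (here `i : Fin n` denotes the Bourbaki label `i + 1`) one has
`w_{i,0}·w₀ = (s_1 s_2 ⋯ s_n)^i`, where `w₀` is the longest element and `w_{i,0}` is the
longest element of the standard parabolic subgroup generated by all simple reflections
except `s_i`. -/
theorem typeA_wi0_mul_w0_eq_coxeter_pow (n : ℕ) (i : Fin n)
    (w₀ : WA n) (hw₀ : ∀ v : WA n, (csA n).length v ≤ (csA n).length w₀)
    (wᵢ : WA n) (hwᵢ : wᵢ ∈ paraA n i)
    (hwᵢmax : ∀ v ∈ paraA n i, (csA n).length v ≤ (csA n).length wᵢ) :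
    wᵢ * w₀ = (segA n 1 n) ^ ((i : ℕ) + 1) := by
  have h₀ := perm_eq_blockRev le_rfl (permRep n w₀) (permRep_apply_le_iff w₀)
    (permRep_apply_le_iff w₀) (fun _ => permRep_apply_of_lt w₀) fun j hj _ =>
      permRep_lt_of_isRightDescent w₀ ⟨j, hj⟩
        (lt_of_le_of_ne (hw₀ _) ((csA n).length_mul_simple_ne _ _))
  have hᵢ := perm_eq_blockRev i.isLt.le (permRep n wᵢ) (permRep_apply_le_iff_of_mem_paraA hwᵢ)
    (permRep_apply_le_iff wᵢ) (fun _ => permRep_apply_of_lt wᵢ) fun j hj hji =>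
      permRep_lt_of_isRightDescent wᵢ ⟨j, hj⟩
        (lt_of_le_of_ne
          (hwᵢmax _ (mul_mem hwᵢ (Subgroup.subset_closure
            ⟨⟨j, hj⟩, fun h => hji (congrArg Fin.val h), rfl⟩)))
          ((csA n).length_mul_simple_ne _ _))
  apply permRep_injective n
  ext x
  by_cases hx : x ≤ n
  · rw [map_mul, Equiv.Perm.mul_apply, h₀, hᵢ, permRep_segA_pow_apply i.isLt hx]
    simp only [blockRev]
    grind
  · rw [permRep_apply_of_lt _ (not_le.mp hx), permRep_apply_of_lt _ (not_le.mp hx)]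
end
end

section
/- Let W be the Weyl group of type B_n (n ≥ 2) with simple reflections s_1, …, s_n labeled as in Bourbaki. Then w_{1,0}·w_0 = (s_1 s_2 ⋯ s_{n−1})·s_n·(s_1 s_2 ⋯ s_{n−1})⁻¹, and the set of elements of minimal length in the conjugacy class of w_{1,0}·w_0 is exactly {s_n}. -/
noncomputable section
open CoxeterMatrix

/-- The Weyl group of type `Bₙ` (equivalently `Cₙ`), given by its Coxeter
presentation; the Coxeter matrices of types `Bₙ` and `Cₙ` coincide.  Bourbaki labels:
`s_j` (`1 ≤ j ≤ n`) is the simple reflection of index `j - 1`, and the bond of order `4`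
joins `s_{n-1}` and `s_n`. -/
abbrev WB (n : ℕ) := (Bₙ n).Group

/-- The canonical Coxeter system of type `Bₙ`/`Cₙ`. -/
def csB (n : ℕ) : CoxeterSystem (Bₙ n) (WB n) := (Bₙ n).toCoxeterSystem

/-- `segB n a b` is the product `s_a s_{a+1} ⋯ s_b` (Bourbaki labels). -/
def segB (n a b : ℕ) : WB n :=
  (((List.finRange n).filter fun k : Fin n => a ≤ (k : ℕ) + 1 ∧ (k : ℕ) + 1 ≤ b).map
    (csB n).simple).prod

/-- The standard parabolic subgroup of the type-`Bₙ`/`Cₙ` Weyl group generated by all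
simple reflections except the one with (zero-based) index `i`. -/
def paraB (n : ℕ) (i : Fin n) : Subgroup (WB n) :=
  Subgroup.closure ((csB n).simple '' {j : Fin n | j ≠ i})

/-- A sequence in a group whose first `n` terms satisfy the Coxeter relations of type `B`,
the bond of order `4` joining the terms of index `0` and `1`. -/
structure IsTypeBSeq {G : Type*} [Group G] (n : ℕ) (r : ℕ → G) : Prop where
  mul_self : ∀ i, i < n → r i * r i = 1
  comm : ∀ i j, i + 1 < j → j < n → Commute (r i) (r j)
  braid : ∀ i, 0 < i → i + 1 < n → r i * r (i + 1) * r i = r (i + 1) * r i * r (i + 1)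
  braid_four : 1 < n → r 0 * r 1 * r 0 * r 1 = r 1 * r 0 * r 1 * r 0

/-- The subgroup generated by the first `m` terms of a sequence. -/
def initialSubgroup {G : Type*} [Group G] (r : ℕ → G) (m : ℕ) : Subgroup G :=
  Subgroup.closure (r '' Set.Iio m)

/-- The palindromic products `r_m ⋯ r_1 r_0 r_1 ⋯ r_m`. -/
def palindrome {G : Type*} [Group G] (r : ℕ → G) : ℕ → G
  | 0 => r 0
  | m + 1 => r (m + 1) * palindrome r m * r (m + 1)

/-- The right coset representatives of `initialSubgroup r m` in `initialSubgroup r (m + 1)`: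
the prefixes of the palindromic word of index `m`. -/
def cosetReps {G : Type*} [Group G] (r : ℕ → G) : ℕ → Set G
  | 0 => {1, r 0}
  | m + 1 => {d | d = 1 ∨ d = palindrome r (m + 1) ∨ ∃ e ∈ cosetReps r m, d = r (m + 1) * e}

/-- The product of the first `m` palindromes. -/
def palindromeProd {G : Type*} [Group G] (r : ℕ → G) : ℕ → G
  | 0 => 1
  | m + 1 => palindromeProd r m * palindrome r m

section Sequences

variable {G : Type*} [Group G] {n : ℕ} {r : ℕ → G}

lemma mem_initialSubgroup {i m : ℕ} (h : i < m) : r i ∈ initialSubgroup r m :=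
  Subgroup.subset_closure ⟨i, h, rfl⟩

lemma initialSubgroup_mono {m k : ℕ} (h : m ≤ k) :
    initialSubgroup r m ≤ initialSubgroup r k :=
  Subgroup.closure_mono (Set.image_mono (Set.Iio_subset_Iio h))

lemma palindrome_mem (m : ℕ) : palindrome r m ∈ initialSubgroup r (m + 1) := by
  induction m with
  | zero => exact mem_initialSubgroup (by omega)
  | succ m ih =>
    exact mul_mem (mul_mem (mem_initialSubgroup (by omega))
      (initialSubgroup_mono (by omega) ih)) (mem_initialSubgroup (by omega))

lemma palindromeProd_mem (m : ℕ) : palindromeProd r m ∈ initialSubgroup r m := by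
  induction m with
  | zero => exact one_mem _
  | succ m ih => exact mul_mem (initialSubgroup_mono (by omega) ih) (palindrome_mem m)

lemma one_mem_cosetReps (m : ℕ) : (1 : G) ∈ cosetReps r m := by
  cases m <;> simp [cosetReps]

lemma palindrome_mem_cosetReps (m : ℕ) : palindrome r m ∈ cosetReps r m := by
  cases m <;> simp [cosetReps, palindrome]

lemma mem_initialSubgroup_of_mem_cosetReps {m : ℕ} {d : G} (hd : d ∈ cosetReps r m) :
    d ∈ initialSubgroup r (m + 1) := by
  induction m generalizing d with
  | zero =>
    rcases hd with rfl | rfl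
    · exact one_mem _
    · exact mem_initialSubgroup (by omega)
  | succ m ih =>
    rcases hd with rfl | rfl | ⟨d', hd', rfl⟩
    · exact one_mem _
    · exact palindrome_mem _
    · exact mul_mem (mem_initialSubgroup (by omega)) (initialSubgroup_mono (by omega) (ih hd'))

lemma IsTypeBSeq.commute_of_mem (h : IsTypeBSeq n r) {m j : ℕ} (hmj : m < j) (hj : j < n)
    {x : G} (hx : x ∈ initialSubgroup r m) : Commute x (r j) := by
  induction hx using Subgroup.closure_induction with
  | mem x hx =>
    obtain ⟨i, hi, rfl⟩ := hx
    have hi : i < m := hi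
    exact h.comm i j (by omega) hj
  | one => exact Commute.one_left _
  | mul x y _ _ hx hy => exact hx.mul_left hy
  | inv x _ hx => exact hx.inv_left

lemma IsTypeBSeq.commute_palindrome (h : IsTypeBSeq n r) {m i : ℕ} (hm : m < n) (hi : i < m) :
    Commute (palindrome r m) (r i) := by
  induction m generalizing i with
  | zero => omega
  | succ m ih =>
    rcases Nat.lt_succ_iff_lt_or_eq.mp hi with hi' | rfl
    · have h1 := h.comm i (m + 1) (by omega) hm
      exact (h1.symm.mul_left (ih (by omega) hi')).mul_left h1.symm
    · cases i with
      | zero =>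
        have := h.braid_four hm
        simp only [palindrome, Commute, SemiconjBy, zero_add, mul_assoc] at this ⊢
        exact this.symm
      | succ k =>
        have h1 : Commute (palindrome r k) (r (k + 1 + 1)) :=
          h.commute_of_mem (by omega) hm (palindrome_mem k)
        have hb := h.braid (k + 1) (by omega) hm
        have e1 : ∀ x, r (k + 1) * (r (k + 1 + 1) * (r (k + 1) * x)) =
            r (k + 1 + 1) * (r (k + 1) * (r (k + 1 + 1) * x)) := fun x => by
          simpa only [mul_assoc] using congrArg (· * x) hb
        have e2 : ∀ x, palindrome r k * (r (k + 1 + 1) * x) =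
            r (k + 1 + 1) * (palindrome r k * x) := fun x => by
          simpa only [mul_assoc] using congrArg (· * x) h1.eq
        have hb' : r (k + 1) * (r (k + 1 + 1) * r (k + 1)) =
            r (k + 1 + 1) * (r (k + 1) * r (k + 1 + 1)) := by
          simpa only [mul_assoc] using hb
        simp only [palindrome, Commute, SemiconjBy, mul_assoc]
        rw [e1, hb', e2]

/-- The key step: the set of products of an element of `initialSubgroup r m` with a coset
representative is stable under right multiplication by the generators. -/
lemma IsTypeBSeq.cosetReps_mul (h : IsTypeBSeq n r) {m i : ℕ} (hm : m < n) (hi : i ≤ m)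
    (IH : ∀ k, k + 1 = m → ∀ w ∈ initialSubgroup r (k + 1),
      ∃ u ∈ initialSubgroup r k, ∃ d ∈ cosetReps r k, w = u * d)
    {d : G} (hd : d ∈ cosetReps r m) :
    ∃ u ∈ initialSubgroup r m, ∃ d' ∈ cosetReps r m, d * r i = u * d' := by
  cases m with
  | zero =>
    obtain rfl : i = 0 := by omega
    rcases hd with rfl | rfl
    · exact ⟨1, one_mem _, r 0, by simp [cosetReps], rfl⟩
    · exact ⟨1, one_mem _, 1, by simp [cosetReps], by simp [h.mul_self 0 hm]⟩
  | succ m =>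
    have hsq : ∀ x, r (m + 1) * (r (m + 1) * x) = x := fun x => by
      rw [← mul_assoc, h.mul_self _ hm, one_mul]
    rcases Nat.lt_or_eq_of_le hi with hi' | rfl
    · have hri : r i ∈ initialSubgroup r (m + 1) := mem_initialSubgroup hi'
      rcases hd with rfl | rfl | ⟨d', hd', rfl⟩
      · exact ⟨r i, hri, 1, one_mem_cosetReps _, by simp⟩
      · exact ⟨r i, hri, _, palindrome_mem_cosetReps _, h.commute_palindrome hm hi'⟩
      · obtain ⟨u, hu, d'', hd'', he⟩ :=
          IH m rfl (d' * r i) (mul_mem (mem_initialSubgroup_of_mem_cosetReps hd') hri)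
        refine ⟨u, initialSubgroup_mono (by omega) hu, r (m + 1) * d'',
          Or.inr (Or.inr ⟨d'', hd'', rfl⟩), ?_⟩
        rw [mul_assoc, he, ← mul_assoc, ← mul_assoc, (h.commute_of_mem (by omega) hm hu).eq]
    · rcases hd with rfl | rfl | ⟨d', hd', rfl⟩
      · exact ⟨1, one_mem _, r (m + 1), Or.inr (Or.inr ⟨1, one_mem_cosetReps _, by simp⟩), by simp⟩
      · refine ⟨1, one_mem _, r (m + 1) * palindrome r m,
          Or.inr (Or.inr ⟨_, palindrome_mem_cosetReps _, rfl⟩), ?_⟩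
        simp [palindrome, mul_assoc, h.mul_self _ hm]
      · cases m with
        | zero =>
          rcases hd' with rfl | rfl
          · exact ⟨1, one_mem _, 1, one_mem_cosetReps _, by simp [h.mul_self _ hm]⟩
          · exact ⟨1, one_mem _, _, palindrome_mem_cosetReps _, by simp [palindrome]⟩
        | succ k =>
          rcases hd' with rfl | rfl | ⟨e, he, rfl⟩
          · exact ⟨1, one_mem _, 1, one_mem_cosetReps _, by simp [h.mul_self _ hm]⟩
          · exact ⟨1, one_mem _, _, palindrome_mem_cosetReps _, by simp [palindrome]⟩
          · refine ⟨r (k + 1), mem_initialSubgroup (by omega), r (k + 1 + 1) * (r (k + 1) * e),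
              Or.inr (Or.inr ⟨_, Or.inr (Or.inr ⟨e, he, rfl⟩), rfl⟩), ?_⟩
            have hc := h.commute_of_mem (by omega) hm (mem_initialSubgroup_of_mem_cosetReps he)
            have hb := h.braid (k + 1) (by omega) hm
            rw [mul_assoc, mul_assoc, hc.eq]
            simpa only [mul_assoc] using (congrArg (· * e) hb).symm

lemma IsTypeBSeq.exists_eq_mul (h : IsTypeBSeq n r) {m : ℕ} (hm : m < n) {w : G}
    (hw : w ∈ initialSubgroup r (m + 1)) :
    ∃ u ∈ initialSubgroup r m, ∃ d ∈ cosetReps r m, w = u * d := by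
  induction m using Nat.strong_induction_on generalizing w with
  | _ m ih =>
  have step : ∀ i ≤ m, ∀ x : G,
      (∃ u ∈ initialSubgroup r m, ∃ d ∈ cosetReps r m, x = u * d) →
      ∃ u ∈ initialSubgroup r m, ∃ d ∈ cosetReps r m, x * r i = u * d := by
    rintro i hi _ ⟨u, hu, d, hd, rfl⟩
    obtain ⟨u', hu', d', hd', he⟩ := h.cosetReps_mul hm hi
      (fun k hk w hw => ih k (by omega) (by omega) hw) hd
    exact ⟨u * u', mul_mem hu hu', d', hd', by rw [mul_assoc, he, mul_assoc]⟩
  induction hw using Subgroup.closure_induction_right with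
  | one => exact ⟨1, one_mem _, 1, one_mem_cosetReps _, by simp⟩
  | mul_right x _ y hy hx =>
    obtain ⟨i, hi, rfl⟩ := hy
    exact step i (Nat.lt_succ_iff.mp hi) x hx
  | mul_inv_cancel x _ y hy hx =>
    obtain ⟨i, hi, rfl⟩ := hy
    have hi : i ≤ m := Nat.lt_succ_iff.mp hi
    rw [inv_eq_of_mul_eq_one_left (h.mul_self i (by omega))]
    exact step i hi x hx

lemma length_palindrome_le {len : G → ℕ} (hmul : ∀ x y, len (x * y) ≤ len x + len y)
    (hr : ∀ i, len (r i) ≤ 1) (m : ℕ) : len (palindrome r m) ≤ 2 * m + 1 := by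
  induction m with
  | zero => exact hr 0
  | succ m ih =>
    have := hmul (r (m + 1) * palindrome r m) (r (m + 1))
    have := hmul (r (m + 1)) (palindrome r m)
    have := hr (m + 1)
    simp only [palindrome]
    omega

/-- A subadditive length function that is at most `1` on the generators is bounded by `m ^ 2` on
the type `B` group of rank `m`, and only `palindromeProd r m` can attain that bound. -/
lemma IsTypeBSeq.length_le (h : IsTypeBSeq n r) {len : G → ℕ} (h1 : len 1 = 0)
    (hmul : ∀ x y, len (x * y) ≤ len x + len y) (hr : ∀ i, len (r i) ≤ 1) :
    ∀ m ≤ n, ∀ w ∈ initialSubgroup r m,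
      len w ≤ m ^ 2 ∧ (len w = m ^ 2 → w = palindromeProd r m) := by
  have hreps : ∀ m, ∀ d ∈ cosetReps r m, d = palindrome r m ∨ len d ≤ 2 * m := fun m => by
    induction m with
    | zero =>
      rintro d (rfl | rfl)
      · exact Or.inr h1.le
      · exact Or.inl rfl
    | succ m ih =>
      rintro d (rfl | rfl | ⟨d', hd', rfl⟩)
      · exact Or.inr (by omega)
      · exact Or.inl rfl
      · right
        have := hmul (r (m + 1)) d'
        have := hr (m + 1)
        have := length_palindrome_le hmul hr m
        rcases ih d' hd' with rfl | h' <;> omega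
  intro m
  induction m with
  | zero =>
    intro _ w hw
    have hw : w = 1 := by simpa [initialSubgroup] using hw
    simp [hw, h1, palindromeProd]
  | succ m ih =>
    intro hm w hw
    obtain ⟨u, hu, d, hd, rfl⟩ := h.exists_eq_mul (by omega) hw
    obtain ⟨hu1, hu2⟩ := ih (by omega) u hu
    have := hmul u d
    have hsq : (m + 1) ^ 2 = m ^ 2 + (2 * m + 1) := by ring
    rcases hreps m d hd with rfl | hd'
    · have := length_palindrome_le hmul hr m
      refine ⟨by omega, fun he => ?_⟩
      rw [hu2 (by omega), palindromeProd]
    · exact ⟨by omega, fun he => by omega⟩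

lemma palindrome_eq_conj (m : ℕ) (h : ∀ i ≤ m, r i * r i = 1) :
    palindrome r m = ((List.range m).map fun k => r (m - k)).prod * r 0 *
      ((List.range m).map fun k => r (m - k)).prod⁻¹ := by
  induction m with
  | zero => simp [palindrome]
  | succ m ih =>
    rw [palindrome, ih fun i hi => h i (by omega), List.range_succ_eq_map]
    simp only [List.map_cons, List.map_map, List.prod_cons, Function.comp_def, Nat.succ_eq_add_one,
      Nat.add_sub_add_right, mul_inv_rev, Nat.sub_zero,
      inv_eq_of_mul_eq_one_left (h (m + 1) le_rfl), mul_assoc]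

end Sequences

/-- The action of the type `B` generators on integer sequences: the generator `0` negates the
entry `0`, and the generator `i + 1` exchanges the entries `i` and `i + 1`. -/
def reflB : ℕ → Function.End (ℕ → ℤ)
  | 0 => fun v k => if k = 0 then -v 0 else v k
  | i + 1 => fun v k => v (if k = i then i + 1 else if k = i + 1 then i else k)

lemma reflB_zero_apply (v : ℕ → ℤ) (k : ℕ) : reflB 0 v k = if k = 0 then -v 0 else v k := rfl

lemma reflB_succ_apply (i : ℕ) (v : ℕ → ℤ) (k : ℕ) :
    reflB (i + 1) v k = v (if k = i then i + 1 else if k = i + 1 then i else k) := rfl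

lemma Function.End.mul_apply {α : Type*} (f g : Function.End α) (x : α) :
    (f * g) x = f (g x) := rfl

lemma Function.End.one_apply {α : Type*} (x : α) : (1 : Function.End α) x = x := rfl

lemma reflB_mul_self (i : ℕ) : reflB i * reflB i = 1 := by
  funext v k
  cases i <;>
    simp only [Function.End.mul_apply, Function.End.one_apply, reflB_zero_apply,
      reflB_succ_apply] <;>
    grind

lemma reflB_comm {i j : ℕ} (h : i + 1 < j) : reflB i * reflB j = reflB j * reflB i := by
  obtain ⟨j, rfl⟩ : ∃ k, j = k + 1 := ⟨j - 1, by omega⟩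
  funext v k
  cases i <;>
    simp only [Function.End.mul_apply, reflB_zero_apply, reflB_succ_apply] <;>
    grind

lemma reflB_braid (i : ℕ) : reflB (i + 1) * reflB (i + 2) * reflB (i + 1) =
    reflB (i + 2) * reflB (i + 1) * reflB (i + 2) := by
  funext v k
  simp only [Function.End.mul_apply, reflB_succ_apply]
  grind

lemma reflB_braid_four : reflB 0 * reflB 1 * reflB 0 * reflB 1 =
    reflB 1 * reflB 0 * reflB 1 * reflB 0 := by
  funext v k
  simp only [Function.End.mul_apply, reflB_zero_apply, reflB_succ_apply 0]
  grind

lemma palindrome_reflB {G : Type*} [Group G] {r : ℕ → G} {n : ℕ} (φ : G →* Function.End (ℕ → ℤ))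
    (hφ : ∀ i < n, φ (r i) = reflB i) (m : ℕ) (hm : m < n) (v : ℕ → ℤ) (k : ℕ) :
    φ (palindrome r m) v k = if k = m then -v k else v k := by
  induction m generalizing v k with
  | zero =>
    rw [palindrome, hφ 0 hm, reflB_zero_apply]
    grind
  | succ m ih =>
    rw [palindrome, map_mul, map_mul, hφ (m + 1) hm, Function.End.mul_apply,
      Function.End.mul_apply, reflB_succ_apply, ih (by omega), reflB_succ_apply]
    grind

lemma palindromeProd_reflB {G : Type*} [Group G] {r : ℕ → G} {n : ℕ}
    (φ : G →* Function.End (ℕ → ℤ)) (hφ : ∀ i < n, φ (r i) = reflB i) (m : ℕ) (hm : m ≤ n)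
    (v : ℕ → ℤ) (k : ℕ) :
    φ (palindromeProd r m) v k = if k < m then -v k else v k := by
  induction m generalizing v k with
  | zero => simp [palindromeProd, Function.End.one_apply]
  | succ m ih =>
    rw [palindromeProd, map_mul, Function.End.mul_apply, ih (by omega), palindrome_reflB φ hφ m hm]
    grind

/-- The positive roots of type `Bₙ` that are negative on `v`: `(i, j, false)` stands for
`e_j - e_i` with `i < j`, and `(i, j, true)` for `e_i + e_j` with `i ≤ j`
(a multiple of `e_i` if `i = j`). -/
def invSet (n : ℕ) (v : ℕ → ℤ) : Finset (ℕ × ℕ × Bool) :=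
  {x ∈ Finset.range n ×ˢ Finset.range n ×ˢ Finset.univ |
    (x.1 < x.2.1 ∧ x.2.2 = false ∧ v x.2.1 < v x.1) ∨
      (x.1 ≤ x.2.1 ∧ x.2.2 = true ∧ v x.1 + v x.2.1 < 0)}

lemma mem_invSet {n : ℕ} {v : ℕ → ℤ} {i j : ℕ} {b : Bool} :
    (i, j, b) ∈ invSet n v ↔ (i < n ∧ j < n) ∧
      ((i < j ∧ b = false ∧ v j < v i) ∨ (i ≤ j ∧ b = true ∧ v i + v j < 0)) := by
  simp [invSet]

lemma card_invSet_le_of_injOn {n : ℕ} {v w : ℕ → ℤ} (a : ℕ × ℕ × Bool)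
    (g : ℕ × ℕ × Bool → ℕ × ℕ × Bool)
    (hg : ∀ x ∈ invSet n w, x ≠ a → g x ∈ invSet n v ∧ g (g x) = x) :
    (invSet n w).card ≤ (invSet n v).card + 1 := by
  have : ((invSet n w).erase a).card ≤ (invSet n v).card := by
    refine Finset.card_le_card_of_injOn g (fun x hx => ?_) fun x hx y hy hxy => ?_
    · obtain ⟨h1, h2⟩ := Finset.mem_erase.mp hx
      exact (hg x h2 h1).1
    · obtain ⟨h1, h2⟩ := Finset.mem_erase.mp hx
      obtain ⟨h3, h4⟩ := Finset.mem_erase.mp hy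
      rw [← (hg x h2 h1).2, ← (hg y h4 h3).2, hxy]
  have := Finset.pred_card_le_card_erase (s := invSet n w) (a := a)
  omega

lemma card_invSet_reflB_le {n i : ℕ} (hi : i < n) (v : ℕ → ℤ) :
    (invSet n (reflB i v)).card ≤ (invSet n v).card + 1 := by
  cases i with
  | zero =>
    refine card_invSet_le_of_injOn (0, 0, true)
      (fun x => if x.1 = 0 ∧ x.2.1 ≠ 0 then (x.1, x.2.1, !x.2.2) else x) ?_
    rintro ⟨a, b, c⟩ hx hne
    simp only [mem_invSet, reflB_zero_apply] at hx
    by_cases h : a = 0 ∧ b ≠ 0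
    · simp only [h, ne_eq, not_false_eq_true, and_self, if_true, mem_invSet, Bool.not_not]
      cases c <;> grind
    · simp only [ne_eq, h, if_false, mem_invSet]
      cases c <;> grind
  | succ i =>
    let σ : ℕ → ℕ := fun k => if k = i then i + 1 else if k = i + 1 then i else k
    refine card_invSet_le_of_injOn (i, i + 1, false)
      (fun x => if x.1 = i ∧ x.2.1 = i + 1 then x else (σ x.1, σ x.2.1, x.2.2)) ?_
    rintro ⟨a, b, c⟩ hx hne
    simp only [mem_invSet, reflB_succ_apply] at hx
    by_cases h : a = i ∧ b = i + 1
    · simp only [h, and_self, if_true, mem_invSet]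
      cases c <;> grind
    · have hlt : ¬(σ a = i ∧ σ b = i + 1) := by grind
      have hσ : ∀ k, σ (σ k) = k := by grind
      simp only [h, hlt, if_false, mem_invSet, hσ, and_true]
      change _ ∧ ((_ ∧ _ ∧ v (σ b) < v (σ a)) ∨ (_ ∧ _ ∧ v (σ a) + v (σ b) < 0)) at hx
      refine ⟨by grind, ?_⟩
      rcases hx.2 with hx' | hx'
      · exact Or.inl ⟨by grind, hx'.2⟩
      · exact Or.inr ⟨by grind, hx'.2⟩

lemma card_invSet_apply_le {B W : Type*} [Group W] {M : CoxeterMatrix B}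
    (cs : CoxeterSystem M W) {n : ℕ} (φ : W →* Function.End (ℕ → ℤ))
    (hφ : ∀ b, ∃ i < n, φ (cs.simple b) = reflB i) (w : W) (v : ℕ → ℤ) :
    (invSet n (φ w v)).card ≤ (invSet n v).card + cs.length w := by
  obtain ⟨ω, hω, rfl⟩ := cs.exists_isReduced w
  rw [hω.eq]
  clear hω
  induction ω with
  | nil => simp [Function.End.one_apply]
  | cons b ω ih =>
    obtain ⟨i, hi, he⟩ := hφ b
    have := card_invSet_reflB_le hi (φ (cs.wordProd ω) v)
    rw [cs.wordProd_cons, map_mul, Function.End.mul_apply, he, List.length_cons]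
    omega

lemma card_invSet_neg {n : ℕ} {v : ℕ → ℤ} (hv : ∀ k < n, v k = -(k + 1)) :
    n ^ 2 ≤ (invSet n v).card := by
  have : n ^ 2 = (Finset.range n ×ˢ Finset.range n).card := by simp [pow_two]
  rw [this]
  refine Finset.card_le_card_of_injOn
    (fun x => if x.1 ≤ x.2 then (x.1, x.2, true) else (x.2, x.1, false)) ?_ ?_
  · rintro ⟨a, b⟩ hx
    have hx : a < n ∧ b < n := by simpa using hx
    have := hv a hx.1
    have := hv b hx.2
    simp only [Finset.mem_coe]
    split_ifs <;> rw [mem_invSet] <;> grind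
  · rintro ⟨a, b⟩ - ⟨c, d⟩ - hxy
    grind

lemma invSet_eq_empty (n : ℕ) : invSet n (fun k => (k : ℤ) + 1) = ∅ := by
  ext ⟨i, j, b⟩
  rw [mem_invSet]
  grind

section Braid

variable {H : Type*} [Monoid H] {a b : H}

lemma mul_pow_two_eq_one (ha : a * a = 1) (hb : b * b = 1) (h : a * b = b * a) :
    (a * b) ^ 2 = 1 := by
  rw [pow_two]
  nth_rw 2 [h]
  rw [mul_assoc, ← mul_assoc b, hb, one_mul, ha]

lemma mul_pow_three_eq_one (ha : a * a = 1) (hb : b * b = 1) (h : a * b * a = b * a * b) :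
    (a * b) ^ 3 = 1 := by
  have : (a * b) ^ 3 = (a * b * a) * (b * a * b) := by
    simp only [pow_succ, pow_zero, one_mul, mul_assoc]
  rw [this, ← h]
  simp only [mul_assoc]
  rw [← mul_assoc a a, ha, one_mul, ← mul_assoc b b, hb, one_mul, ha]

lemma mul_pow_four_eq_one (ha : a * a = 1) (hb : b * b = 1)
    (h : a * b * a * b = b * a * b * a) : (a * b) ^ 4 = 1 := by
  have : (a * b) ^ 4 = (a * b * a * b) * (a * b * a * b) := by
    simp only [pow_succ, pow_zero, one_mul, mul_assoc]
  rw [this]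
  nth_rw 2 [h]
  simp only [mul_assoc]
  rw [← mul_assoc b b, hb, one_mul, ← mul_assoc a a, ha, one_mul, ← mul_assoc b b, hb, one_mul, ha]

end Braid

lemma typeB_apply {n : ℕ} (i j : Fin n) : Bₙ n i j =
    if i = j then 1
    else if ((i : ℕ) = n - 1 ∧ (j : ℕ) = n - 2) ∨ ((j : ℕ) = n - 1 ∧ (i : ℕ) = n - 2) then 4
    else if (j : ℕ) + 1 = i ∨ (i : ℕ) + 1 = j then 3 else 2 := rfl

/-- A sequence in a monoid satisfying the type `B` relations, with the bond of order `4` between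
the indices `0` and `1`, gives a liftable family for the Bourbaki labelling. -/
lemma isLiftable_typeB {H : Type*} [Monoid H] {f : ℕ → H} (hsq : ∀ i, f i * f i = 1)
    (hcomm : ∀ i j, i + 1 < j → f i * f j = f j * f i)
    (hbraid : ∀ i, f (i + 1) * f (i + 2) * f (i + 1) = f (i + 2) * f (i + 1) * f (i + 2))
    (hfour : f 0 * f 1 * f 0 * f 1 = f 1 * f 0 * f 1 * f 0) (n : ℕ) :
    (Bₙ n).IsLiftable fun i : Fin n => f (n - 1 - i) := by
  intro i j
  beta_reduce
  have hi := i.isLt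
  have hj := j.isLt
  rw [typeB_apply]
  split_ifs with h1 h2 h3
  · rw [h1, pow_one, hsq]
  · refine mul_pow_four_eq_one (hsq _) (hsq _) ?_
    have h1 : (i : ℕ) ≠ j := fun h => h1 (Fin.ext h)
    rcases h2 with h2 | h2
    · rw [show n - 1 - (i : ℕ) = 0 by omega, show n - 1 - (j : ℕ) = 1 by omega]
      exact hfour
    · rw [show n - 1 - (i : ℕ) = 1 by omega, show n - 1 - (j : ℕ) = 0 by omega]
      exact hfour.symm
  · refine mul_pow_three_eq_one (hsq _) (hsq _) ?_
    rcases h3 with h3 | h3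
    · obtain ⟨k, hk⟩ : ∃ k, n - 1 - (i : ℕ) = k + 1 := ⟨n - 1 - i - 1, by omega⟩
      rw [hk, show n - 1 - (j : ℕ) = k + 2 by omega]
      exact hbraid k
    · obtain ⟨k, hk⟩ : ∃ k, n - 1 - (j : ℕ) = k + 1 := ⟨n - 1 - j - 1, by omega⟩
      rw [hk, show n - 1 - (i : ℕ) = k + 2 by omega]
      exact (hbraid k).symm
  · refine mul_pow_two_eq_one (hsq _) (hsq _) ?_
    have h1 : (i : ℕ) ≠ j := fun h => h1 (Fin.ext h)
    rcases lt_or_gt_of_ne h1 with h | h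
    · exact (hcomm _ _ (by omega)).symm
    · exact hcomm _ _ (by omega)

/-- The simple reflections of type `Bₙ` in the order opposite to the Bourbaki labelling. -/
def simpleRev (n i : ℕ) : WB n :=
  if h : i < n then (csB n).simple ⟨n - 1 - i, by omega⟩ else 1

lemma simple_eq_simpleRev {n : ℕ} (i : Fin n) : (csB n).simple i = simpleRev n (n - 1 - i) := by
  rw [simpleRev, dif_pos (by omega)]
  congr 1
  ext
  simp only
  omega

lemma simpleRev_pow {n i j : ℕ} (hi : i < n) (hj : j < n) :
    (simpleRev n i * simpleRev n j) ^
      (Bₙ n ⟨n - 1 - i, by omega⟩ ⟨n - 1 - j, by omega⟩) = 1 := by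
  rw [simpleRev, simpleRev, dif_pos hi, dif_pos hj]
  exact (csB n).simple_mul_simple_pow _ _

lemma simpleRev_inv (n i : ℕ) : (simpleRev n i)⁻¹ = simpleRev n i := by
  unfold simpleRev
  split_ifs <;> simp

lemma isTypeBSeq_simpleRev (n : ℕ) : IsTypeBSeq n (simpleRev n) where
  mul_self i _ := by
    nth_rw 1 [← simpleRev_inv]
    exact inv_mul_cancel _
  comm i j hij hj := by
    have h := simpleRev_pow (show i < n by omega) hj
    rw [typeB_apply, if_neg (by simp; omega), if_neg (by simp; omega),
      if_neg (by simp; omega), pow_two] at h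
    simpa only [Commute, SemiconjBy, mul_inv_rev, simpleRev_inv] using eq_inv_of_mul_eq_one_left h
  braid i hi hin := by
    have h := simpleRev_pow (show i < n by omega) hin
    rw [typeB_apply, if_neg (by simp; omega), if_neg (by simp; omega),
      if_pos (by simp; omega)] at h
    have h' : (simpleRev n i * simpleRev n (i + 1) * simpleRev n i) *
        (simpleRev n (i + 1) * simpleRev n i * simpleRev n (i + 1)) = 1 := by
      simpa only [pow_succ, pow_zero, one_mul, mul_assoc] using h
    simpa only [mul_inv_rev, simpleRev_inv, mul_assoc] using eq_inv_of_mul_eq_one_left h'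
  braid_four hn := by
    have h := simpleRev_pow (show 0 < n by omega) hn
    rw [typeB_apply, if_neg (by simp; omega), if_pos (by simp; omega)] at h
    have h' : (simpleRev n 0 * simpleRev n 1 * simpleRev n 0 * simpleRev n 1) *
        (simpleRev n 0 * simpleRev n 1 * simpleRev n 0 * simpleRev n 1) = 1 := by
      simpa only [pow_succ, pow_zero, one_mul, mul_assoc] using h
    simpa only [mul_inv_rev, simpleRev_inv, mul_assoc] using eq_inv_of_mul_eq_one_left h'

lemma lift_simpleRev {H : Type*} [Monoid H] {f : ℕ → H} {n : ℕ}
    (hf : (Bₙ n).IsLiftable fun i : Fin n => f (n - 1 - i)) {i : ℕ} (hi : i < n) :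
    (csB n).lift ⟨_, hf⟩ (simpleRev n i) = f i := by
  rw [simpleRev, dif_pos hi, CoxeterSystem.lift_apply_simple]
  congr 1
  simp only
  omega

lemma initialSubgroup_simpleRev_self (n : ℕ) : initialSubgroup (simpleRev n) n = ⊤ := by
  rw [eq_top_iff, ← (csB n).subgroup_closure_range_simple, Subgroup.closure_le]
  rintro _ ⟨i, rfl⟩
  rw [simple_eq_simpleRev]
  exact mem_initialSubgroup (by omega)

lemma paraB_zero {n : ℕ} (hn : 0 < n) :
    paraB n ⟨0, hn⟩ = initialSubgroup (simpleRev n) (n - 1) := by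
  refine le_antisymm ((Subgroup.closure_le _).mpr ?_) ((Subgroup.closure_le _).mpr ?_)
  · rintro _ ⟨i, hi, rfl⟩
    have hi : (i : ℕ) ≠ 0 := fun h => hi (Fin.ext h)
    rw [simple_eq_simpleRev]
    exact mem_initialSubgroup (by omega)
  · rintro _ ⟨i, hi, rfl⟩
    have hi : i < n - 1 := hi
    rw [simpleRev, dif_pos (by omega)]
    refine Subgroup.subset_closure ⟨_, ?_, rfl⟩
    simp only [Set.mem_ofPred_eq, ne_eq, Fin.mk.injEq]
    omega

lemma segB_eq_prod {n : ℕ} (hn : 0 < n) :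
    segB n 1 (n - 1) = ((List.range (n - 1)).map fun k => simpleRev n (n - 1 - k)).prod := by
  obtain ⟨m, rfl⟩ : ∃ m, n = m + 1 := ⟨n - 1, by omega⟩
  have h : (List.range m) = (List.range (m + 1)).filter fun k => 1 ≤ k + 1 ∧ k + 1 ≤ m := by
    rw [List.range_succ, List.filter_append, List.filter_eq_self.mpr (by simp)]
    simp
  rw [segB, Nat.add_sub_cancel, h, ← List.map_coe_finRange_eq_range, List.filter_map, List.map_map]
  congr 1
  exact List.map_congr_left fun i _ => simple_eq_simpleRev i

lemma length_simpleRev_le (n i : ℕ) : (csB n).length (simpleRev n i) ≤ 1 := by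
  unfold simpleRev
  split_ifs <;> simp

lemma length_palindromeProd (n : ℕ) :
    n ^ 2 ≤ (csB n).length (palindromeProd (simpleRev n) n) := by
  have hf := isLiftable_typeB reflB_mul_self (fun _ _ => reflB_comm) reflB_braid
    reflB_braid_four n
  have hφ : ∀ i < n, (csB n).lift ⟨_, hf⟩ (simpleRev n i) = reflB i :=
    fun i hi => lift_simpleRev hf hi
  have h := card_invSet_apply_le (csB n) (n := n) ((csB n).lift ⟨_, hf⟩)
    (fun i => ⟨n - 1 - i, by omega, by rw [simple_eq_simpleRev, hφ _ (by omega)]⟩)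
    (palindromeProd (simpleRev n) n) fun k => (k : ℤ) + 1
  rw [invSet_eq_empty, Finset.card_empty, zero_add] at h
  refine (card_invSet_neg fun k hk => ?_).trans h
  rw [palindromeProd_reflB _ hφ n le_rfl, if_pos hk]

/-- The last simple reflection is not conjugate to any other simple reflection. -/
lemma eq_last_of_isConj {n : ℕ} (hn : 0 < n) {j : Fin n}
    (h : IsConj (simpleRev n 0) ((csB n).simple j)) : j = ⟨n - 1, by omega⟩ := by
  obtain ⟨f, hf₀, hf₁⟩ : ∃ f : ℕ → ℤˣ, f 0 = -1 ∧ ∀ i, f (i + 1) = 1 :=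
    ⟨fun i => if i = 0 then -1 else 1, by simp, by simp⟩
  have hf := isLiftable_typeB (f := f) (fun i => Int.units_mul_self _) (fun i j _ => mul_comm _ _)
    (by simp [hf₁]) (by simp [hf₀, hf₁ 0]) n
  have hφ := ((csB n).lift ⟨_, hf⟩).map_isConj h
  rw [isConj_iff_eq, simple_eq_simpleRev, lift_simpleRev hf hn, lift_simpleRev hf (by omega)] at hφ
  by_contra hj
  have hj : (j : ℕ) ≠ n - 1 := fun h => hj (Fin.ext h)
  rw [hf₀, show n - 1 - (j : ℕ) = n - 1 - j - 1 + 1 by omega, hf₁] at hφ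
  exact absurd hφ (by decide)

/-- In the Weyl group of type `Bₙ` (`n ≥ 2`, Bourbaki labels),
`w_{1,0}·w₀ = (s_1 ⋯ s_{n−1})·s_n·(s_1 ⋯ s_{n−1})⁻¹`, and the set of minimal length
elements of the conjugacy class of `w_{1,0}·w₀` is exactly `{s_n}`. -/
theorem typeB_w10_mul_w0 (n : ℕ) (hn : 2 ≤ n)
    (w₀ : WB n) (hw₀ : ∀ v : WB n, (csB n).length v ≤ (csB n).length w₀)
    (w₁ : WB n) (hw₁ : w₁ ∈ paraB n ⟨0, by omega⟩)
    (hw₁max : ∀ v ∈ paraB n ⟨0, by omega⟩, (csB n).length v ≤ (csB n).length w₁) :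
    w₁ * w₀ = segB n 1 (n - 1) * (csB n).simple ⟨n - 1, by omega⟩ * (segB n 1 (n - 1))⁻¹ ∧
    {w : WB n | IsConj (w₁ * w₀) w ∧
        ∀ v : WB n, IsConj (w₁ * w₀) v → (csB n).length w ≤ (csB n).length v}
      = {(csB n).simple ⟨n - 1, by omega⟩} := by
  have hlast : (csB n).simple ⟨n - 1, by omega⟩ = simpleRev n 0 := by
    rw [simple_eq_simpleRev, Nat.sub_self]
  have hB := isTypeBSeq_simpleRev n
  have hlen := hB.length_le (csB n).length_one (csB n).length_mul_le (length_simpleRev_le n)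
  have hz := length_palindromeProd n
  have hz₀ : w₀ = palindromeProd (simpleRev n) n := by
    have h := hlen n le_rfl w₀ (by rw [initialSubgroup_simpleRev_self]; trivial)
    exact h.2 (le_antisymm h.1 (hz.trans (hw₀ _)))
  have hsucc : palindromeProd (simpleRev n) n =
      palindromeProd (simpleRev n) (n - 1) * palindrome (simpleRev n) (n - 1) := by
    obtain ⟨m, rfl⟩ : ∃ m, n = m + 1 := ⟨n - 1, by omega⟩
    rfl
  have hpara := paraB_zero (n := n) (by omega)
  have hz₁ : ∀ w ∈ paraB n ⟨0, by omega⟩, (csB n).length w₁ ≤ (csB n).length w →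
      w = palindromeProd (simpleRev n) (n - 1) := by
    intro w hw hle
    have hmax := hw₁max (palindromeProd (simpleRev n) (n - 1))
      (hpara ▸ palindromeProd_mem (n - 1))
    have hmul := (csB n).length_mul_le (palindromeProd (simpleRev n) (n - 1))
      (palindrome (simpleRev n) (n - 1))
    have hpal := length_palindrome_le (csB n).length_mul_le (length_simpleRev_le n) (n - 1)
    obtain ⟨h1, h2⟩ := hlen (n - 1) (by omega) w (hpara ▸ hw)
    refine h2 (le_antisymm h1 ?_)
    have hsq : n ^ 2 = (n - 1) ^ 2 + (2 * (n - 1) + 1) := by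
      obtain ⟨m, rfl⟩ : ∃ m, n = m + 1 := ⟨n - 1, by omega⟩
      rw [Nat.add_sub_cancel]
      ring
    rw [hsucc] at hz
    omega
  have hinv : w₁ * w₁ = 1 := by
    rw [mul_eq_one_iff_eq_inv, hz₁ w₁⁻¹ (inv_mem hw₁) ((csB n).length_inv w₁).ge]
    exact hz₁ w₁ hw₁ le_rfl
  have hconj : w₁ * w₀ = segB n 1 (n - 1) * (csB n).simple ⟨n - 1, by omega⟩ *
      (segB n 1 (n - 1))⁻¹ := by
    rw [hz₀, hsucc, ← hz₁ w₁ hw₁ le_rfl, ← mul_assoc, hinv, one_mul, hlast,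
      segB_eq_prod (by omega), palindrome_eq_conj]
    exact fun i hi => hB.mul_self i (by omega)
  refine ⟨hconj, ?_⟩
  have hclass : ∀ v, IsConj (w₁ * w₀) v ↔ IsConj ((csB n).simple ⟨n - 1, by omega⟩) v := by
    have h : IsConj ((csB n).simple ⟨n - 1, by omega⟩) (w₁ * w₀) :=
      isConj_iff.mpr ⟨_, hconj.symm⟩
    exact fun v => ⟨h.trans, h.symm.trans⟩
  have hpos : ∀ v, IsConj ((csB n).simple ⟨n - 1, by omega⟩) v → 1 ≤ (csB n).length v := by
    intro v hv
    rw [Nat.one_le_iff_ne_zero, Ne, (csB n).length_eq_zero_iff]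
    rintro rfl
    have h1 := (csB n).length_simple ⟨n - 1, by omega⟩
    rw [isConj_one_left.mp hv, (csB n).length_one] at h1
    omega
  simp only [hclass]
  ext w
  rw [Set.mem_ofPred_eq, Set.mem_singleton_iff]
  constructor
  · rintro ⟨hw, hmin⟩
    have hle := hmin _ (IsConj.refl _)
    rw [(csB n).length_simple] at hle
    obtain ⟨j, rfl⟩ := (csB n).length_eq_one_iff.mp (le_antisymm hle (hpos w hw))
    rw [hlast] at hw
    rw [eq_last_of_isConj (by omega) hw]
  · rintro rfl
    refine ⟨IsConj.refl _, fun v hv => ?_⟩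
    rw [(csB n).length_simple]
    exact hpos v hv
end
end

section
/- Let W be the Weyl group of type C_n (n ≥ 2) with simple reflections s_1, …, s_n labeled as in Bourbaki. Then w_{n,0}·w_0 = s_n·(s_{n−1}s_n)·(s_{n−2}s_{n−1}s_n)···(s_1 s_2 ⋯ s_n), and the set of elements of minimal length in the conjugacy class of w_{n,0}·w_0 equals the set of Coxeter elements of the standard parabolic subgroup W_J with J = {j ∈ {1,…,n} : j odd}; in particular, the minimal length in this conjugacy class equals ⌈n/2⌉. -/
noncomputable section
open CoxeterMatrix

/-- The action on `ℤ` of the simple reflection of type `C` which exchanges `k` and `k - 1`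
(`k ≥ 2`), respectively `1` and `-1` (`k = 1`), compatibly with negation. -/
def signedReflFun (k : ℕ) (x : ℤ) : ℤ :=
  if k ≤ 1 then (if x = 1 ∨ x = -1 then -x else x)
  else if x = k then k - 1 else if x = k - 1 then k
  else if x = -k then 1 - k else if x = 1 - k then -k else x

theorem signedReflFun_involutive (k : ℕ) : Function.Involutive (signedReflFun k) := by
  intro x
  obtain ⟨y, hy⟩ : ∃ y, y = signedReflFun k x := ⟨_, rfl⟩
  rw [← hy]
  unfold signedReflFun at hy ⊢
  split_ifs at hy <;> split_ifs <;> omega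

/-- The simple reflection of type `C` with label `k`, counted from the special end of the
Dynkin diagram, as a permutation of `ℤ`. -/
def signedRefl (k : ℕ) : Equiv.Perm ℤ := (signedReflFun_involutive k).toPerm

theorem signedRefl_apply (k : ℕ) (x : ℤ) : signedRefl k x =
    if k ≤ 1 then (if x = 1 ∨ x = -1 then -x else x)
    else if x = k then k - 1 else if x = k - 1 then k
    else if x = -k then 1 - k else if x = 1 - k then -k else x := rfl

theorem signedRefl_mul_self (k : ℕ) : signedRefl k * signedRefl k = 1 :=
  Equiv.ext (signedReflFun_involutive k)

theorem signedRefl_neg (k : ℕ) (x : ℤ) : signedRefl k (-x) = -signedRefl k x := by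
  simp only [signedRefl_apply]
  split_ifs <;> omega

theorem signedRefl_apply_self {k : ℕ} (hk : 2 ≤ k) : signedRefl k k = k - 1 := by
  simp only [signedRefl_apply]
  split_ifs <;> omega

theorem signedRefl_apply_pred {k : ℕ} (hk : 2 ≤ k) : signedRefl k (k - 1) = k := by
  simp only [signedRefl_apply]
  split_ifs <;> omega

theorem signedRefl_one_one : signedRefl 1 1 = -1 := by
  simp [signedRefl_apply]

theorem signedRefl_apply_of_ne {k : ℕ} {x : ℤ} (h₁ : x ≠ k) (h₂ : x ≠ -k)
    (h₃ : k ≠ 1 → x ≠ k - 1 ∧ x ≠ 1 - k) : signedRefl k x = x := by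
  simp only [signedRefl_apply]
  split_ifs <;> omega

/-- A permutation commuting with negation conjugates one simple reflection to another as soon as
it carries the simple root of the first to plus that of the second. -/
theorem mul_signedRefl_eq {σ : Equiv.Perm ℤ} (hσ : ∀ x, σ (-x) = -σ x) {k t : ℕ}
    (hk : 1 ≤ k) (ht : 1 ≤ t) (hkt : k = 1 ↔ t = 1)
    (h : σ k = t ∧ σ (k - 1) = t - 1 ∨ σ k = -(t - 1) ∧ σ (k - 1) = -t) :
    σ * signedRefl k = signedRefl t * σ := by
  have h0 : σ 0 = 0 := by
    have := hσ 0
    rw [neg_zero] at this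
    omega
  have key : ∀ x : ℤ, 0 ≤ x → σ (signedRefl k x) = signedRefl t (σ x) := by
    intro x hx0
    by_cases hxk : x = k
    · subst hxk
      by_cases hk1 : k = 1
      · obtain rfl := hkt.1 hk1
        subst hk1
        rcases h with h | h
        · simp_all [signedRefl_one_one]
        · have := h.2
          simp [h0] at this
      · rw [signedRefl_apply_self (by omega)]
        rcases h with h | h
        · rw [h.1, h.2, signedRefl_apply_self (by omega)]
        · rw [h.1, h.2, signedRefl_neg _, signedRefl_apply_pred (by omega)]
    by_cases hxk' : k ≠ 1 ∧ x = k - 1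
    · obtain ⟨hk1, rfl⟩ := hxk'
      rw [signedRefl_apply_pred (by omega)]
      rcases h with h | h
      · rw [h.1, h.2, signedRefl_apply_pred (by omega)]
      · rw [h.1, h.2, signedRefl_neg _, signedRefl_apply_self (by omega)]
    · have hne : ∀ y, x ≠ y → σ x ≠ σ y := fun y hx e => hx (σ.injective e)
      have h₁ := hne k hxk
      have h₂ := hne (-k) (by omega)
      rw [hσ] at h₂
      rw [signedRefl_apply_of_ne hxk (by omega) (by omega)]
      by_cases hk1 : k = 1
      · obtain rfl := hkt.1 hk1
        subst hk1
        simp only [Nat.cast_one, sub_self, h0] at h h₁ h₂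
        rw [signedRefl_apply_of_ne] <;> push_cast <;> omega
      · have h₃ := hne (k - 1) (by omega)
        have h₄ := hne (-(k - 1)) (by omega)
        rw [hσ] at h₄
        rw [signedRefl_apply_of_ne] <;> omega
  ext x
  rw [Equiv.Perm.mul_apply, Equiv.Perm.mul_apply]
  rcases le_total 0 x with hx | hx
  · exact key x hx
  · have := key (-x) (by omega)
    rw [signedRefl_neg _, hσ, hσ, signedRefl_neg _] at this
    omega

theorem signedRefl_commute {j k : ℕ} (hj : 1 ≤ j) (h : j + 2 ≤ k) :
    signedRefl k * signedRefl j = signedRefl j * signedRefl k := by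
  refine mul_signedRefl_eq (signedRefl_neg _) hj hj Iff.rfl (.inl ⟨?_, ?_⟩) <;>
  exact signedRefl_apply_of_ne (by omega) (by omega) (by omega)

theorem signedRefl_braid {k : ℕ} (hk : 2 ≤ k) :
    signedRefl k * signedRefl (k + 1) * signedRefl k =
      signedRefl (k + 1) * (signedRefl k * signedRefl (k + 1)) := by
  refine mul_signedRefl_eq (fun x => ?_) (by omega) (by omega) (by omega) (.inl ⟨?_, ?_⟩)
  · simp [signedRefl_neg]
  · have := signedRefl_apply_pred (k := k + 1) (by omega)
    push_cast at this
    rw [add_sub_cancel_right] at this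
    rw [Equiv.Perm.mul_apply, this, signedRefl_apply_of_ne] <;> push_cast <;> omega
  · rw [Equiv.Perm.mul_apply, signedRefl_apply_of_ne (k := k + 1), signedRefl_apply_pred hk] <;>
      push_cast <;> omega

theorem signedRefl_braid_four :
    signedRefl 2 * signedRefl 1 * signedRefl 2 * signedRefl 1 =
      signedRefl 1 * (signedRefl 2 * signedRefl 1 * signedRefl 2) := by
  refine mul_signedRefl_eq (fun x => ?_) (by omega) (by omega) (by omega) (.inl ⟨?_, ?_⟩)
  · simp [signedRefl_neg]
  · simp [signedRefl_apply]
  · simp [signedRefl_apply]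

theorem Bn_apply (n : ℕ) (i j : Fin n) : (Bₙ n) i j =
    if i = j then 1
      else (if (i : ℕ) = n - 1 ∧ (j : ℕ) = n - 2 ∨ (j : ℕ) = n - 1 ∧ (i : ℕ) = n - 2 then 4
        else (if (j : ℕ) + 1 = i ∨ (i : ℕ) + 1 = j then 3 else 2)) := rfl

theorem isLiftable_signedRefl (n : ℕ) :
    (Bₙ n).IsLiftable fun j : Fin n => signedRefl (n - j) := by
  have key : ∀ i j : Fin n, i < j →
      (signedRefl (n - i) * signedRefl (n - j)) ^ (Bₙ n) i j = 1 := by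
    intro i j h
    have hij : (i : ℕ) < j := h
    have hjn := j.2
    rw [Bn_apply, if_neg h.ne]
    have sq := signedRefl_mul_self
    have inv : ∀ k, (signedRefl k)⁻¹ = signedRefl k := fun k => inv_eq_of_mul_eq_one_left (sq k)
    split_ifs with h4 h3
    · have e1 : n - (i : ℕ) = 2 := by omega
      have e2 : n - (j : ℕ) = 1 := by omega
      rw [e1, e2, show (signedRefl 2 * signedRefl 1) ^ 4 =
        (signedRefl 2 * signedRefl 1 * signedRefl 2 * signedRefl 1) *
          (signedRefl 2 * signedRefl 1 * signedRefl 2 * signedRefl 1) by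
        simp only [pow_succ, pow_zero, one_mul, mul_assoc]]
      nth_rw 1 [signedRefl_braid_four]
      rw [mul_eq_one_iff_eq_inv]
      simp only [mul_inv_rev, inv, mul_assoc]
    · obtain ⟨k, hk⟩ : ∃ k, n - (j : ℕ) = k := ⟨_, rfl⟩
      have e1 : n - (i : ℕ) = k + 1 := by omega
      rw [hk, e1, show (signedRefl (k + 1) * signedRefl k) ^ 3 =
        signedRefl (k + 1) * (signedRefl k * signedRefl (k + 1)) *
          (signedRefl k * signedRefl (k + 1) * signedRefl k) by
        simp only [pow_succ, pow_zero, one_mul, mul_assoc],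
        ← signedRefl_braid (by omega), mul_eq_one_iff_eq_inv]
      simp only [mul_inv_rev, inv, mul_assoc]
    · rw [pow_two, mul_eq_one_iff_eq_inv, mul_inv_rev, inv, inv]
      exact signedRefl_commute (by omega) (by omega)
  intro i j
  rcases lt_trichotomy i j with h | rfl | h
  · exact key i j h
  · rw [Bn_apply, if_pos rfl, pow_one]
    exact signedRefl_mul_self _
  · have := key j i h
    rw [← inv_inj, ← inv_pow, mul_inv_rev, inv_one, (Bₙ n).symmetric] at this
    simpa only [inv_eq_of_mul_eq_one_left (signedRefl_mul_self _)] using this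

/-- The action of the Weyl group of type `C` on `ℤ` by signed permutations. -/
def signedRep (n : ℕ) : WB n →* Equiv.Perm ℤ := (csB n).lift ⟨_, isLiftable_signedRefl n⟩

theorem signedRep_simple (n : ℕ) (j : Fin n) :
    signedRep n ((csB n).simple j) = signedRefl (n - j) :=
  (csB n).lift_apply_simple (isLiftable_signedRefl n) j

theorem signedRep_neg {n : ℕ} (w : WB n) (x : ℤ) :
    signedRep n w (-x) = -signedRep n w x := by
  induction w using (csB n).simple_induction_left generalizing x with
  | one => simp
  | mul_simple_left w j ih =>
    simp only [map_mul, Equiv.Perm.mul_apply, ih, signedRep_simple, signedRefl_neg]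

theorem signedRep_zero {n : ℕ} (w : WB n) : signedRep n w 0 = 0 := by
  have := signedRep_neg w 0
  rw [neg_zero] at this
  omega

/-- The simple reflection with label `k`, counted from the special end of the diagram. -/
def specialSimple (n k : ℕ) : WB n :=
  if h : 1 ≤ k ∧ k ≤ n then (csB n).simple ⟨n - k, by omega⟩ else 1

theorem specialSimple_of_le {n k : ℕ} (hk : 1 ≤ k) (hkn : k ≤ n) :
    specialSimple n k = (csB n).simple ⟨n - k, by omega⟩ := dif_pos ⟨hk, hkn⟩

theorem simple_eq_specialSimple {n : ℕ} (j : Fin n) :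
    (csB n).simple j = specialSimple n (n - j) := by
  rw [specialSimple_of_le (by omega) (by omega)]
  congr
  ext
  simp only
  omega

theorem signedRep_specialSimple {n k : ℕ} (hk : 1 ≤ k) (hkn : k ≤ n) :
    signedRep n (specialSimple n k) = signedRefl k := by
  rw [specialSimple_of_le hk hkn, signedRep_simple]
  congr
  simp only
  omega

theorem specialSimple_mul_self (n k : ℕ) : specialSimple n k * specialSimple n k = 1 := by
  unfold specialSimple
  split_ifs <;> simp

theorem specialSimple_inv (n k : ℕ) : (specialSimple n k)⁻¹ = specialSimple n k :=
  inv_eq_of_mul_eq_one_left (specialSimple_mul_self n k)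

theorem specialSimple_commute (n : ℕ) {j k : ℕ} (h : j + 2 ≤ k) :
    Commute (specialSimple n j) (specialSimple n k) := by
  by_cases hj : 1 ≤ j ∧ j ≤ n
  swap
  · rw [specialSimple, dif_neg hj]
    exact Commute.one_left _
  by_cases hk : 1 ≤ k ∧ k ≤ n
  swap
  · rw [specialSimple.eq_1 n k, dif_neg hk]
    exact Commute.one_right _
  have := (csB n).simple_mul_simple_pow ⟨n - j, by omega⟩ ⟨n - k, by omega⟩
  rw [Bn_apply, if_neg (by simp; omega), if_neg (by simp; omega), if_neg (by simp; omega),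
    ← specialSimple_of_le hj.1 hj.2, ← specialSimple_of_le hk.1 hk.2, pow_two,
    mul_eq_one_iff_eq_inv, mul_inv_rev, specialSimple_inv, specialSimple_inv] at this
  exact this

theorem specialSimple_braid {n k : ℕ} (hk : 2 ≤ k) (hkn : k + 1 ≤ n) :
    specialSimple n (k + 1) * specialSimple n k * specialSimple n (k + 1) =
      specialSimple n k * specialSimple n (k + 1) * specialSimple n k := by
  have := (csB n).simple_mul_simple_pow ⟨n - (k + 1), by omega⟩ ⟨n - k, by omega⟩
  rw [Bn_apply, if_neg (by simp; omega), if_neg (by simp; omega), if_pos (by simp; omega),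
    ← specialSimple_of_le (by omega) hkn, ← specialSimple_of_le (by omega) (by omega)] at this
  have h : specialSimple n (k + 1) * specialSimple n k * specialSimple n (k + 1) *
      (specialSimple n k * specialSimple n (k + 1) * specialSimple n k) = 1 := by
    simpa only [pow_succ, pow_zero, one_mul, mul_assoc] using this
  rw [mul_eq_one_iff_eq_inv] at h
  simpa only [mul_inv_rev, specialSimple_inv, mul_assoc] using h

theorem specialSimple_braid_four {n : ℕ} (hn : 2 ≤ n) :
    Commute (specialSimple n 2 * specialSimple n 1 * specialSimple n 2) (specialSimple n 1) := by
  have := (csB n).simple_mul_simple_pow ⟨n - 2, by omega⟩ ⟨n - 1, by omega⟩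
  rw [Bn_apply, if_neg (by simp; omega), if_pos (by simp),
    ← specialSimple_of_le (by omega) hn, ← specialSimple_of_le (by omega) (by omega)] at this
  have h : specialSimple n 2 * specialSimple n 1 * specialSimple n 2 * specialSimple n 1 *
      (specialSimple n 2 * specialSimple n 1 * specialSimple n 2 * specialSimple n 1) = 1 := by
    simpa only [pow_succ, pow_zero, one_mul, mul_assoc] using this
  rw [mul_eq_one_iff_eq_inv] at h
  simpa only [Commute, SemiconjBy, mul_inv_rev, specialSimple_inv, mul_assoc] using h

/-- The standard parabolic subgroup generated by the `m` simple reflections closest to the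
special end of the diagram. -/
def specialPara (n m : ℕ) : Subgroup (WB n) :=
  Subgroup.closure (specialSimple n '' Set.Icc 1 m)

theorem specialSimple_mem_specialPara (n : ℕ) {k m : ℕ} (hk : 1 ≤ k) (hkm : k ≤ m) :
    specialSimple n k ∈ specialPara n m :=
  Subgroup.subset_closure ⟨k, ⟨hk, hkm⟩, rfl⟩

theorem specialPara_mono (n : ℕ) {l m : ℕ} (h : l ≤ m) : specialPara n l ≤ specialPara n m :=
  Subgroup.closure_mono (Set.image_mono (Set.Icc_subset_Icc_right h))

theorem specialPara_zero (n : ℕ) : specialPara n 0 = ⊥ := by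
  simp [specialPara]

theorem specialPara_self (n : ℕ) : specialPara n n = ⊤ := by
  rw [eq_top_iff, ← (csB n).subgroup_closure_range_simple]
  refine Subgroup.closure_mono ?_
  rintro _ ⟨j, rfl⟩
  exact ⟨n - j, ⟨by omega, by omega⟩, (simple_eq_specialSimple j).symm⟩

theorem commute_specialSimple_of_mem {n m k : ℕ} {u : WB n} (hu : u ∈ specialPara n m)
    (hk : m + 2 ≤ k) : Commute u (specialSimple n k) := by
  have : specialPara n m ≤ Subgroup.centralizer {specialSimple n k} := by
    refine (Subgroup.closure_le _).2 ?_
    rintro _ ⟨j, hj, rfl⟩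
    rw [SetLike.mem_coe, Subgroup.mem_centralizer_singleton_iff]
    exact (specialSimple_commute n (by have := hj.2; omega)).eq
  exact Subgroup.mem_centralizer_singleton_iff.1 (this hu)

/-- The element `s_{m+1} ⋯ s_2 s_1 s_2 ⋯ s_{m+1}` (labels counted from the special end),
which changes the sign of the coordinate `m + 1`. -/
def signChange (n : ℕ) : ℕ → WB n
  | 0 => specialSimple n 1
  | m + 1 => specialSimple n (m + 2) * signChange n m * specialSimple n (m + 2)

theorem signChange_mem (n m : ℕ) : signChange n m ∈ specialPara n (m + 1) := by
  induction m with
  | zero => exact specialSimple_mem_specialPara n le_rfl le_rfl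
  | succ m ih =>
    have h := specialSimple_mem_specialPara n (show 1 ≤ m + 2 by omega) le_rfl
    exact mul_mem (mul_mem h (specialPara_mono n (by omega) ih)) h

theorem signChange_commute {n m k : ℕ} (hm : m + 1 ≤ n) (hk : 1 ≤ k) (hkm : k ≤ m) :
    Commute (signChange n m) (specialSimple n k) := by
  induction m using Nat.strong_induction_on with
  | _ m ih =>
    match m, ih with
    | 0, _ => omega
    | 1, _ =>
      obtain rfl : k = 1 := by omega
      exact specialSimple_braid_four hm
    | m + 2, ih =>
      by_cases hk' : k ≤ m + 1
      · have h := (specialSimple_commute n (show k + 2 ≤ m + 3 by omega)).symm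
        exact (h.mul_left (ih (m + 1) (by omega) (by omega) hk')).mul_left h
      · obtain rfl : k = m + 2 := by omega
        have br := specialSimple_braid (show 2 ≤ m + 2 by omega) (show m + 2 + 1 ≤ n by omega)
        have cm := commute_specialSimple_of_mem (signChange_mem n m)
          (show m + 1 + 2 ≤ m + 3 by omega)
        simp only [signChange, Commute, SemiconjBy]
        rw [show m + 1 + 2 = m + 3 by omega, show m + 2 + 1 = m + 3 by omega] at *
        generalize specialSimple n (m + 3) = a at *
        generalize specialSimple n (m + 2) = b at *
        generalize signChange n m = z at *
        calc a * (b * z * b) * a * b = a * b * z * (b * a * b) := by simp only [mul_assoc]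
          _ = a * b * (z * a) * b * a := by rw [← br]; simp only [mul_assoc]
          _ = (a * b * a) * z * b * a := by rw [cm.eq]; simp only [mul_assoc]
          _ = b * (a * (b * z * b) * a) := by rw [br]; simp only [mul_assoc]

/-- The double cosets of the parabolic subgroup of rank `m` in that of rank `m + 1`. -/
theorem specialPara_succ_cases {n m : ℕ} (hm : m + 1 ≤ n) {w : WB n}
    (hw : w ∈ specialPara n (m + 1)) :
    w ∈ specialPara n m ∨
      (∃ u ∈ specialPara n m, ∃ v ∈ specialPara n m, w = u * specialSimple n (m + 1) * v) ∨
      ∃ u ∈ specialPara n m, w = u * signChange n m := by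
  induction m generalizing w with
  | zero =>
    rw [specialPara_zero]
    have : ∀ v ∈ specialPara n 1, v = 1 ∨ v = specialSimple n 1 := by
      intro v hv
      induction hv using Subgroup.closure_induction with
      | mem x hx =>
        obtain ⟨k, hk, rfl⟩ := hx
        obtain rfl : k = 1 := le_antisymm hk.2 hk.1
        exact .inr rfl
      | one => exact .inl rfl
      | mul x y _ _ hx hy =>
        rcases hx with rfl | rfl <;> rcases hy with rfl | rfl <;> simp [specialSimple_mul_self]
      | inv x _ hx => rcases hx with rfl | rfl <;> simp [specialSimple_inv]
    rcases this w hw with rfl | rfl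
    · exact .inl (one_mem _)
    · exact .inr (.inr ⟨1, one_mem _, (one_mul _).symm⟩)
  | succ m ih =>
    have key : ∀ k, 1 ≤ k → k ≤ m + 2 → ∀ x : WB n,
        (x ∈ specialPara n (m + 1) ∨
          (∃ u ∈ specialPara n (m + 1), ∃ v ∈ specialPara n (m + 1),
            x = u * specialSimple n (m + 2) * v) ∨
          ∃ u ∈ specialPara n (m + 1), x = u * signChange n (m + 1)) →
        (x * specialSimple n k ∈ specialPara n (m + 1) ∨
          (∃ u ∈ specialPara n (m + 1), ∃ v ∈ specialPara n (m + 1),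
            x * specialSimple n k = u * specialSimple n (m + 2) * v) ∨
          ∃ u ∈ specialPara n (m + 1), x * specialSimple n k = u * signChange n (m + 1)) := by
      intro k hk hkm x hx
      by_cases hk' : k ≤ m + 1
      · have hs := specialSimple_mem_specialPara n hk hk'
        rcases hx with hx | ⟨u, hu, v, hv, rfl⟩ | ⟨u, hu, rfl⟩
        · exact .inl (mul_mem hx hs)
        · exact .inr (.inl ⟨u, hu, _, mul_mem hv hs, mul_assoc _ _ _⟩)
        · refine .inr (.inr ⟨_, mul_mem hu hs, ?_⟩)
          rw [mul_assoc, (signChange_commute hm hk hk').eq, mul_assoc]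
      · obtain rfl : k = m + 2 := by omega
        rcases hx with hx | ⟨u, hu, v, hv, rfl⟩ | ⟨u, hu, rfl⟩
        · exact .inr (.inl ⟨x, hx, 1, one_mem _, (mul_one _).symm⟩)
        · rcases ih (by omega) hv with hv | ⟨a, ha, b, hb, rfl⟩ | ⟨a, ha, rfl⟩
          · left
            rw [mul_assoc u, ← (commute_specialSimple_of_mem hv le_rfl).eq, ← mul_assoc,
              mul_assoc _ _ (specialSimple n (m + 2)), specialSimple_mul_self, mul_one]
            exact mul_mem hu (specialPara_mono n (by omega) hv)
          · have ca := commute_specialSimple_of_mem ha (k := m + 2) le_rfl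
            have cb := commute_specialSimple_of_mem hb (k := m + 2) le_rfl
            rcases Nat.eq_zero_or_pos m with rfl | hm0
            · rw [specialPara_zero, Subgroup.mem_bot] at ha hb
              subst ha hb
              refine .inr (.inr ⟨u, hu, ?_⟩)
              simp [signChange, mul_assoc]
            have br := specialSimple_braid (show 2 ≤ m + 1 by omega) (show m + 1 + 1 ≤ n by omega)
            have hs := specialSimple_mem_specialPara n (show 1 ≤ m + 1 by omega) le_rfl
            refine .inr (.inl ⟨u * a * specialSimple n (m + 1),
              mul_mem (mul_mem hu (specialPara_mono n (by omega) ha)) hs,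
              specialSimple n (m + 1) * b, mul_mem hs (specialPara_mono n (by omega) hb), ?_⟩)
            rw [show m + 1 + 1 = m + 2 by omega] at br
            generalize specialSimple n (m + 2) = s at *
            generalize specialSimple n (m + 1) = t at *
            calc u * s * (a * t * b) * s = u * (s * a) * t * (b * s) := by simp only [mul_assoc]
              _ = u * a * (s * t * s) * b := by rw [← ca.eq, cb.eq]; simp only [mul_assoc]
              _ = u * a * t * s * (t * b) := by rw [br]; simp only [mul_assoc]
          · refine .inr (.inr ⟨u * a, mul_mem hu (specialPara_mono n (by omega) ha), ?_⟩)
            have ca := commute_specialSimple_of_mem ha (k := m + 2) le_rfl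
            simp only [signChange]
            calc _ = u * (specialSimple n (m + 2) * a) * signChange n m *
                  specialSimple n (m + 2) := by simp only [mul_assoc]
              _ = _ := by rw [← ca.eq]; simp only [mul_assoc]
        · refine .inr (.inl ⟨u, hu, _, signChange_mem n m, ?_⟩)
          simp only [signChange, mul_assoc, specialSimple_mul_self, mul_one]
    induction hw using Subgroup.closure_induction_right with
    | one => exact .inl (one_mem _)
    | mul_right x _ y hy hx =>
      obtain ⟨k, hk, rfl⟩ := hy
      exact key k hk.1 hk.2 x hx
    | mul_inv_cancel x _ y hy hx =>
      obtain ⟨k, hk, rfl⟩ := hy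
      rw [specialSimple_inv]
      exact key k hk.1 hk.2 x hx

theorem signedRep_apply_of_mem_specialPara {n m : ℕ} (hm : m ≤ n) {u : WB n}
    (hu : u ∈ specialPara n m) {x : ℤ} (hx : m < x) : signedRep n u x = x := by
  have : specialPara n m ≤ (MulAction.stabilizer (Equiv.Perm ℤ) x).comap (signedRep n) := by
    refine (Subgroup.closure_le _).2 ?_
    rintro _ ⟨k, ⟨hk, hkm⟩, rfl⟩
    simp only [SetLike.mem_coe, Subgroup.mem_comap, MulAction.mem_stabilizer_iff,
      Equiv.Perm.smul_def]
    rw [signedRep_specialSimple hk (by omega)]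
    exact signedRefl_apply_of_ne (by omega) (by omega) (by omega)
  simpa using this hu

theorem signedRep_apply_of_lt {n : ℕ} (w : WB n) {x : ℤ} (hx : n < x) : signedRep n w x = x :=
  signedRep_apply_of_mem_specialPara le_rfl (by simp [specialPara_self]) hx

theorem signedRep_signChange {n m : ℕ} (hm : m + 1 ≤ n) :
    signedRep n (signChange n m) (m + 1 : ℕ) = -(m + 1 : ℕ) := by
  induction m with
  | zero => simp [signChange, signedRep_specialSimple le_rfl hm, signedRefl_one_one]
  | succ m ih =>
    have h₁ := signedRefl_apply_self (show 2 ≤ m + 2 by omega)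
    have h₂ := signedRefl_apply_pred (show 2 ≤ m + 2 by omega)
    have e : ((m + 2 : ℕ) : ℤ) - 1 = (m + 1 : ℕ) := by push_cast; ring
    rw [e] at h₁ h₂
    simp only [signChange, map_mul, Equiv.Perm.mul_apply,
      signedRep_specialSimple (show 1 ≤ m + 2 by omega) hm]
    rw [show m + 1 + 1 = m + 2 by omega, h₁, ih (by omega), signedRefl_neg, h₂]

theorem signedRep_injective (n : ℕ) : Function.Injective (signedRep n) := by
  rw [injective_iff_map_eq_one]
  intro w hw
  have key : ∀ m ≤ n, w ∈ specialPara n m → w = 1 := by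
    intro m
    induction m with
    | zero =>
      intro _ h
      rwa [specialPara_zero, Subgroup.mem_bot] at h
    | succ m ih =>
      intro hm h
      have fix : ∀ u ∈ specialPara n m, signedRep n u (m + 1 : ℕ) = (m + 1 : ℕ) := fun u hu =>
        signedRep_apply_of_mem_specialPara (by omega) hu (by push_cast; omega)
      have hw1 : signedRep n w (m + 1 : ℕ) = (m + 1 : ℕ) := by rw [hw]; rfl
      rcases specialPara_succ_cases hm h with h | ⟨u, hu, v, hv, rfl⟩ | ⟨u, hu, rfl⟩
      · exact ih (by omega) h
      · rw [map_mul, map_mul, Equiv.Perm.mul_apply, Equiv.Perm.mul_apply, fix v hv] at hw1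
        have := (signedRep n u).injective (hw1.trans (fix u hu).symm)
        rw [signedRep_specialSimple (by omega) hm] at this
        rcases Nat.eq_zero_or_pos m with rfl | hm0
        · simp [signedRefl_one_one] at this
        · rw [signedRefl_apply_self (by omega)] at this
          omega
      · rw [map_mul, Equiv.Perm.mul_apply, signedRep_signChange hm] at hw1
        have := (signedRep n u).injective (hw1.trans (fix u hu).symm)
        omega
  exact key n le_rfl (by simp [specialPara_self])

theorem simple_root_of_signedRefl_lt {k t : ℕ} (ht : 1 ≤ t) {a b : ℤ} (hab : a < b)
    (h : signedRefl t b < signedRefl t a) (h₁ : k = 1 → a = 0) (h₂ : k ≠ 1 → a ≠ 0)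
    (h₃ : b ≠ 0) (h₄ : b ≠ -a) :
    (k = 1 ↔ t = 1) ∧ (b = t ∧ a = t - 1 ∨ b = -(t - 1) ∧ a = -t) := by
  rw [signedRefl_apply, signedRefl_apply] at h
  split_ifs at h <;> omega

/-- The exchange property, with descents read off from the signed permutation. -/
theorem exists_exchange {n k : ℕ} (hk : 1 ≤ k) (hkn : k ≤ n) (l : List (Fin n))
    (h : signedRep n ((csB n).wordProd l) k < signedRep n ((csB n).wordProd l) (k - 1)) :
    ∃ l' : List (Fin n), l'.length + 1 = l.length ∧
      (csB n).wordProd l' = (csB n).wordProd l * specialSimple n k := by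
  induction l with
  | nil =>
    simp only [CoxeterSystem.wordProd_nil, map_one, Equiv.Perm.one_apply] at h
    omega
  | cons j l ih =>
    by_cases hl : signedRep n ((csB n).wordProd l) k < signedRep n ((csB n).wordProd l) (k - 1)
    · obtain ⟨l', h₁, h₂⟩ := ih hl
      refine ⟨j :: l', by simp [h₁], ?_⟩
      rw [CoxeterSystem.wordProd_cons, CoxeterSystem.wordProd_cons, h₂, mul_assoc]
    · refine ⟨l, rfl, ?_⟩
      rw [CoxeterSystem.wordProd_cons] at h ⊢
      have ht : 1 ≤ n - (j : ℕ) := by omega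
      generalize (csB n).wordProd l = u at *
      rw [map_mul, Equiv.Perm.mul_apply, Equiv.Perm.mul_apply, signedRep_simple] at h
      have ne : ∀ x y : ℤ, x ≠ y → signedRep n u x ≠ signedRep n u y :=
        fun x y hxy e => hxy ((signedRep n u).injective e)
      have n₁ := ne k (k - 1) (by omega)
      have n₂ := ne k 0 (by omega)
      have n₃ := ne k (-(k - 1)) (by omega)
      rw [signedRep_zero] at n₂
      rw [signedRep_neg] at n₃
      obtain ⟨h₁, h₂⟩ := simple_root_of_signedRefl_lt (k := k) ht (by omega) h
        (fun e => by subst e; simpa using signedRep_zero u)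
        (fun e => by
          have := ne (k - 1) 0 (by omega)
          rwa [signedRep_zero] at this) n₂ n₃
      have := mul_signedRefl_eq (signedRep_neg u) hk ht h₁ h₂
      apply signedRep_injective
      rw [map_mul, map_mul, mul_assoc, signedRep_simple, signedRep_specialSimple hk hkn] at *
      rw [this, ← mul_assoc, signedRefl_mul_self, one_mul]

theorem length_mul_specialSimple_lt {n k : ℕ} (hk : 1 ≤ k) (hkn : k ≤ n) (w : WB n)
    (h : signedRep n w k < signedRep n w (k - 1)) :
    (csB n).length (w * specialSimple n k) < (csB n).length w := by
  obtain ⟨l, hl, rfl⟩ := (csB n).exists_isReduced w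
  obtain ⟨l', h₁, h₂⟩ := exists_exchange hk hkn l h
  rw [← h₂, hl.eq, ← h₁]
  exact Nat.lt_succ_of_le ((csB n).length_wordProd_le l')

theorem signedRep_lt_of_length_le {n k : ℕ} (hk : 1 ≤ k) (hkn : k ≤ n) (w : WB n)
    (h : (csB n).length (w * specialSimple n k) ≤ (csB n).length w) :
    signedRep n w k < signedRep n w (k - 1) := by
  by_contra hlt
  have hne : signedRep n w k ≠ signedRep n w (k - 1) := fun e => by
    have := (signedRep n w).injective e
    omega
  have := length_mul_specialSimple_lt hk hkn (w * specialSimple n k) (by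
    rw [map_mul, Equiv.Perm.mul_apply, Equiv.Perm.mul_apply, signedRep_specialSimple hk hkn]
    rcases Nat.lt_or_ge 1 k with hk1 | hk1
    · rw [signedRefl_apply_self hk1, signedRefl_apply_pred hk1]
      omega
    · obtain rfl : k = 1 := by omega
      rw [signedRefl_apply_of_ne (x := ((1 : ℕ) : ℤ) - 1) (by simp) (by simp) (by simp)]
      simp only [Nat.cast_one, signedRefl_one_one, signedRep_neg, sub_self, signedRep_zero] at *
      omega)
  rw [mul_assoc, specialSimple_mul_self, mul_one] at this
  omega

theorem signedRep_apply_mem_Icc {n : ℕ} (w : WB n) {x : ℤ} (h₁ : -n ≤ x) (h₂ : x ≤ n) :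
    -n ≤ signedRep n w x ∧ signedRep n w x ≤ n := by
  constructor
  · by_contra hlt
    have := signedRep_apply_of_lt w (x := -signedRep n w x) (by omega)
    rw [signedRep_neg, neg_inj] at this
    have := (signedRep n w).injective this
    omega
  · by_contra hlt
    have := (signedRep n w).injective (signedRep_apply_of_lt w (x := signedRep n w x) (by omega))
    omega

theorem exists_signedRep_apply_eq_of_pos {n m : ℕ} (hm : m ≤ n) (d : ℕ) (hd : d < m) :
    ∃ w ∈ specialPara n m, signedRep n w m = (m - d : ℕ) := by
  induction d with
  | zero => exact ⟨1, one_mem _, rfl⟩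
  | succ d ih =>
    obtain ⟨w, hw, h⟩ := ih (by omega)
    refine ⟨specialSimple n (m - d) * w,
      mul_mem (specialSimple_mem_specialPara n (by omega) (by omega)) hw, ?_⟩
    rw [map_mul, Equiv.Perm.mul_apply, h, signedRep_specialSimple (by omega) (by omega),
      signedRefl_apply_self (by omega)]
    omega

theorem exists_signedRep_apply_eq {n m : ℕ} (hm : m ≤ n) {p : ℤ} (hp : p ≠ 0) (h₁ : -m ≤ p)
    (h₂ : p ≤ m) : ∃ w ∈ specialPara n m, signedRep n w m = p := by
  rcases lt_or_gt_of_ne hp with h | h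
  · obtain ⟨w, hw, e⟩ := exists_signedRep_apply_eq_of_pos hm (m + p).toNat (by omega)
    obtain ⟨k, rfl⟩ : ∃ k, m = k + 1 := ⟨m - 1, by omega⟩
    refine ⟨w * signChange n k, mul_mem hw (signChange_mem n k), ?_⟩
    rw [map_mul, Equiv.Perm.mul_apply, signedRep_signChange hm, signedRep_neg, e]
    omega
  · obtain ⟨w, hw, e⟩ := exists_signedRep_apply_eq_of_pos hm (m - p).toNat (by omega)
    exact ⟨w, hw, by rw [e]; omega⟩

theorem exists_signedRep_eq {n m : ℕ} (hm : m ≤ n) (σ : Equiv.Perm ℤ)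
    (hodd : ∀ x, σ (-x) = -σ x) (hfix : ∀ x : ℤ, m < x → σ x = x) :
    ∃ w : WB n, signedRep n w = σ := by
  have h0 : ∀ τ : Equiv.Perm ℤ, (∀ x, τ (-x) = -τ x) → τ 0 = 0 := by
    intro τ hτ
    have := hτ 0
    rw [neg_zero] at this
    omega
  induction m generalizing σ with
  | zero =>
    refine ⟨1, ?_⟩
    ext x
    rw [map_one, Equiv.Perm.one_apply]
    rcases lt_trichotomy x 0 with hx | rfl | hx
    · have := hfix (-x) (by push_cast; omega)
      rw [hodd] at this
      omega
    · exact (h0 σ hodd).symm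
    · exact (hfix x (by simpa using hx)).symm
  | succ m ih =>
    have ne : σ (m + 1 : ℕ) ≠ 0 := fun e => by
      have := σ.injective (e.trans (h0 σ hodd).symm)
      omega
    have le : σ (m + 1 : ℕ) ≤ (m + 1 : ℕ) := by
      by_contra hlt
      have := σ.injective (hfix _ (not_le.1 hlt))
      omega
    have ge : -(m + 1 : ℕ) ≤ σ (m + 1 : ℕ) := by
      by_contra hlt
      have := hfix (-σ (m + 1 : ℕ)) (by omega)
      rw [hodd, neg_inj] at this
      have := σ.injective this
      omega
    obtain ⟨w, hw, e⟩ := exists_signedRep_apply_eq hm ne ge le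
    obtain ⟨v, hv⟩ := ih (by omega) (signedRep n w⁻¹ * σ)
      (fun x => by simp only [Equiv.Perm.mul_apply, hodd, signedRep_neg])
      (fun x hx => by
        rw [map_inv, Equiv.Perm.mul_apply, Equiv.Perm.inv_eq_iff_eq]
        rcases eq_or_ne x (m + 1 : ℕ) with rfl | hne
        · exact e.symm
        · rw [hfix x (by push_cast at *; omega),
            signedRep_apply_of_mem_specialPara hm hw (by push_cast at *; omega)])
    exact ⟨w * v, by rw [map_mul, hv, map_inv, mul_inv_cancel_left]⟩

theorem signedRep_ext {n : ℕ} {v w : WB n}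
    (h : ∀ x : ℤ, 1 ≤ x → x ≤ n → signedRep n v x = signedRep n w x) : v = w := by
  have key : ∀ x : ℤ, 0 ≤ x → signedRep n v x = signedRep n w x := by
    intro x hx
    rcases hx.eq_or_lt with rfl | hx
    · rw [signedRep_zero, signedRep_zero]
    rcases le_or_gt x n with hn | hn
    · exact h x hx hn
    · rw [signedRep_apply_of_lt v hn, signedRep_apply_of_lt w hn]
  apply signedRep_injective
  ext x
  rcases le_total 0 x with hx | hx
  · exact key x hx
  · have := key (-x) (by omega)
    rwa [signedRep_neg, signedRep_neg, neg_inj] at this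

theorem eq_sub_of_strictAnti_steps {f : ℤ → ℤ} {a n A : ℤ}
    (hf : ∀ k, a < k → k ≤ n → f k < f (k - 1)) (ha : f a ≤ A) (hn : A - (n - a) ≤ f n)
    {k : ℤ} (hak : a ≤ k) (hkn : k ≤ n) : f k = A - (k - a) := by
  have up : ∀ d : ℕ, a + d ≤ n → f (a + d) ≤ A - d := by
    intro d
    induction d with
    | zero => intro _; simpa using ha
    | succ d ih =>
      intro h
      push_cast at *
      have h₁ := hf (a + (d + 1)) (by omega) h
      rw [show a + ((d : ℤ) + 1) - 1 = a + d by ring] at h₁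
      have := ih (by omega)
      omega
  have dn : ∀ d : ℕ, a ≤ n - d → A - (n - a) + d ≤ f (n - d) := by
    intro d
    induction d with
    | zero => intro _; simpa using hn
    | succ d ih =>
      intro h
      push_cast at *
      have h₁ := hf (n - d) (by omega) (by omega)
      rw [show n - (d : ℤ) - 1 = n - (d + 1) by ring] at h₁
      have := ih (by omega)
      omega
  have h₁ := up (k - a).toNat (by omega)
  have h₂ := dn (n - k).toNat (by omega)
  rw [Int.toNat_of_nonneg (by omega)] at h₁ h₂
  rw [add_sub_cancel] at h₁
  rw [sub_sub_cancel] at h₂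
  omega

theorem signedRep_longest {n : ℕ} {w₀ : WB n}
    (hw₀ : ∀ v : WB n, (csB n).length v ≤ (csB n).length w₀) {x : ℤ} (h₁ : 1 ≤ x) (h₂ : x ≤ n) :
    signedRep n w₀ x = -x := by
  have := eq_sub_of_strictAnti_steps (f := signedRep n w₀) (a := 0) (n := n) (A := 0)
    (fun k hk hkn => by
      lift k to ℕ using hk.le
      exact signedRep_lt_of_length_le (by omega) (by omega) w₀ (hw₀ _))
    (signedRep_zero w₀).le
    (by have := (signedRep_apply_mem_Icc w₀ (x := n) (by omega) le_rfl).1; omega)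
    (show 0 ≤ x by omega) h₂
  omega

theorem signedRefl_pos_iff {k : ℕ} (hk : 2 ≤ k) (x : ℤ) : 0 < signedRefl k x ↔ 0 < x := by
  rw [signedRefl_apply]
  split_ifs <;> omega

/-- The parabolic subgroup omitting the special simple reflection preserves signs. -/
theorem signedRep_pos_iff_of_mem_paraB {n : ℕ} (hn : 1 ≤ n) {u : WB n}
    (hu : u ∈ paraB n ⟨n - 1, by omega⟩) (x : ℤ) : 0 < signedRep n u x ↔ 0 < x := by
  induction hu using Subgroup.closure_induction generalizing x with
  | mem y hy =>
    obtain ⟨j, hj, rfl⟩ := hy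
    rw [signedRep_simple]
    refine signedRefl_pos_iff ?_ x
    have : (j : ℕ) ≠ n - 1 := fun e => hj (Fin.ext e)
    omega
  | one => simp
  | mul y z _ _ hy hz => rw [map_mul, Equiv.Perm.mul_apply, hy, hz]
  | inv y _ hy => rw [← hy, ← Equiv.Perm.mul_apply, ← map_mul, mul_inv_cancel, map_one,
      Equiv.Perm.one_apply]

theorem signedRep_parabolic_longest {n : ℕ} (hn : 1 ≤ n) {wₙ : WB n}
    (hwₙ : wₙ ∈ paraB n ⟨n - 1, by omega⟩)
    (hmax : ∀ v ∈ paraB n ⟨n - 1, by omega⟩, (csB n).length v ≤ (csB n).length wₙ)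
    {x : ℤ} (h₁ : 1 ≤ x) (h₂ : x ≤ n) : signedRep n wₙ x = n + 1 - x := by
  have := eq_sub_of_strictAnti_steps (f := signedRep n wₙ) (a := 1) (n := n) (A := n)
    (fun k hk hkn => by
      lift k to ℕ using (by omega)
      refine signedRep_lt_of_length_le (by omega) (by omega) wₙ (hmax _ (mul_mem hwₙ ?_))
      rw [specialSimple_of_le (by omega) (by omega)]
      refine Subgroup.subset_closure ⟨_, ?_, rfl⟩
      simp only [Set.mem_ofPred_eq, ne_eq, Fin.mk.injEq]
      omega)
    (signedRep_apply_mem_Icc wₙ (x := 1) (by omega) (by omega)).2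
    (by
      have := (signedRep_pos_iff_of_mem_paraB hn hwₙ n).2 (by omega)
      omega) h₁ h₂
  omega

theorem segB_succ {n t : ℕ} (ht : t + 1 < n) :
    segB n (n - (t + 1)) n = specialSimple n (t + 2) * segB n (n - t) n := by
  rw [specialSimple_of_le (by omega) (by omega), segB, segB, ← List.prod_cons, ← List.map_cons]
  congr 2
  refine List.SortedLT.eq_of_mem_iff ?_ ?_ ?_
  · exact ((List.pairwise_lt_finRange n).filter _).sortedLT
  · refine List.Pairwise.sortedLT (List.pairwise_cons.2
      ⟨fun k hk => ?_, (List.pairwise_lt_finRange n).filter _⟩)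
    simp only [List.mem_filter, decide_eq_true_eq] at hk
    rw [Fin.lt_def]
    simp only
    omega
  · intro k
    simp only [List.mem_filter, List.mem_finRange, decide_eq_true_eq, List.mem_cons, Fin.ext_iff,
      true_and]
    omega

theorem segB_self {n : ℕ} (hn : 1 ≤ n) : segB n n n = specialSimple n 1 := by
  rw [specialSimple_of_le le_rfl hn, segB, ← List.prod_singleton (x := (csB n).simple _),
    ← List.map_singleton]
  congr 2
  refine List.SortedLT.eq_of_mem_iff ?_ ?_ ?_
  · exact ((List.pairwise_lt_finRange n).filter _).sortedLT
  · exact (List.pairwise_singleton _ _).sortedLT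
  · intro k
    simp only [List.mem_filter, List.mem_finRange, decide_eq_true_eq, List.mem_singleton,
      Fin.ext_iff, true_and]
    omega

theorem signedRep_segB {n t : ℕ} (ht : t < n) {x : ℤ} (hx : 1 ≤ x) :
    signedRep n (segB n (n - t) n) x =
      if x = 1 then -(t + 1 : ℤ) else if x ≤ t + 1 then x - 1 else x := by
  induction t with
  | zero =>
    rw [Nat.sub_zero, segB_self (by omega), signedRep_specialSimple le_rfl (by omega),
      signedRefl_apply]
    split_ifs <;> omega
  | succ t ih =>
    rw [segB_succ ht, map_mul, Equiv.Perm.mul_apply, ih (by omega),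
      signedRep_specialSimple (by omega) (by omega), signedRefl_apply]
    push_cast
    split_ifs <;> omega

theorem signedRep_prod_segB {n m : ℕ} (hm : m ≤ n) {x : ℤ} (hx : 1 ≤ x) :
    signedRep n ((List.range m).map fun t => segB n (n - t) n).prod x =
      if x ≤ m then x - (m + 1) else x := by
  induction m generalizing x with
  | zero => simp; omega
  | succ m ih =>
    rw [List.range_succ, List.map_append, List.prod_append, map_mul, Equiv.Perm.mul_apply,
      List.map_singleton, List.prod_singleton, signedRep_segB (by omega) hx]
    push_cast
    split_ifs with h₁ h₂ h₃
    · rw [signedRep_neg, ih (by omega) (by omega), if_neg (by omega)]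
      omega
    · omega
    · rw [ih (by omega) (by omega), if_pos (by omega)]
      ring
    · rw [ih (by omega) hx, if_neg (by omega)]

/-- Sizes of coverings: if each point of a path is hit by one of its two neighbouring edges
(only one edge at the first point), then at least half of the edges are used. -/
theorem half_le_sum_of_cover (a : ℕ → ℕ) : ∀ n : ℕ, (1 ≤ n → 1 ≤ a 0) →
    (∀ i, i + 1 < n → 1 ≤ a (i + 1) + a i) → (n + 1) / 2 ≤ ∑ i ∈ Finset.range n, a i
  | 0, _, _ => by simp
  | 1, h₀, _ => by simpa using h₀ le_rfl
  | n + 2, h₀, h => by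
    have ih := half_le_sum_of_cover a n (fun _ => h₀ (by omega)) fun i hi => h i (by omega)
    have := h n (by omega)
    rw [Finset.sum_range_succ, Finset.sum_range_succ]
    omega

theorem eq_of_cover_of_sum_le_half (a : ℕ → ℕ) : ∀ n : ℕ, (1 ≤ n → 1 ≤ a 0) →
    (∀ i, i + 1 < n → 1 ≤ a (i + 1) + a i) → (Odd n → 1 ≤ a (n - 1)) →
    ∑ i ∈ Finset.range n, a i ≤ (n + 1) / 2 →
    ∀ j < n, a j = if Even j then 1 else 0
  | 0, _, _, _, _, j, hj => by omega
  | 1, h₀, _, _, hs, j, hj => by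
    have h := h₀ le_rfl
    obtain rfl : j = 0 := by omega
    simp at hs ⊢
    omega
  | n + 2, h₀, h, hodd, hs, j, hj => by
    have hA := half_le_sum_of_cover a n (fun _ => h₀ (by omega)) fun i hi => h i (by omega)
    have hn := h n (by omega)
    rw [Finset.sum_range_succ, Finset.sum_range_succ] at hs
    have hlast : Odd n → 1 ≤ a (n - 1) := by
      intro ho
      have h₁ := hodd (by rw [Nat.odd_iff] at *; omega)
      rw [show n + 2 - 1 = n + 1 by omega] at h₁
      have h₂ := h (n - 1) (by omega)
      rw [show n - 1 + 1 = n by have := ho.pos; omega] at h₂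
      omega
    have ih := eq_of_cover_of_sum_le_half a n (fun _ => h₀ (by omega))
      (fun i hi => h i (by omega)) hlast (by omega)
    rcases lt_or_ge j n with hjn | hjn
    · exact ih j hjn
    rcases Nat.even_or_odd n with he | ho
    · have h₁ : 1 ≤ a n := by
        rcases Nat.eq_zero_or_pos n with rfl | hpos
        · exact h₀ (by omega)
        · have h₂ := h (n - 1) (by omega)
          rw [show n - 1 + 1 = n by omega, ih (n - 1) (by omega), if_neg] at h₂
          · simpa using h₂
          · rw [Nat.even_iff] at *
            omega
      rcases (by omega : j = n ∨ j = n + 1) with rfl | rfl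
      · rw [if_pos he]
        omega
      · rw [if_neg (by rw [Nat.even_iff] at *; omega)]
        omega
    · have h₁ := hodd (by rw [Nat.odd_iff] at *; omega)
      rw [show n + 2 - 1 = n + 1 by omega] at h₁
      rw [Nat.odd_iff] at ho
      rcases (by omega : j = n ∨ j = n + 1) with rfl | rfl
      · rw [if_neg (by rw [Nat.even_iff]; omega)]
        omega
      · rw [if_pos (by rw [Nat.even_iff]; omega)]
        omega

theorem sum_count_map_val {n : ℕ} (l : List (Fin n)) :
    ∑ i ∈ Finset.range n, (l.map Fin.val).count i = l.length := by
  have := Multiset.sum_count_eq_card (s := Finset.range n) (m := (l.map Fin.val : Multiset ℕ))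
    (by simp)
  simpa using this

theorem signedRep_wordProd_apply_of_forall {n : ℕ} {l : List (Fin n)} {x : ℤ}
    (h : ∀ j ∈ l, signedRefl (n - j) x = x) : signedRep n ((csB n).wordProd l) x = x := by
  induction l with
  | nil => simp
  | cons j l ih =>
    rw [CoxeterSystem.wordProd_cons, map_mul, Equiv.Perm.mul_apply,
      ih fun i hi => h i (List.mem_cons_of_mem _ hi), signedRep_simple]
    exact h j List.mem_cons_self

theorem signedRep_wordProd_pos_iff {n : ℕ} {l : List (Fin n)}
    (h : ∀ j ∈ l, (j : ℕ) ≠ n - 1) (x : ℤ) :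
    0 < signedRep n ((csB n).wordProd l) x ↔ 0 < x := by
  induction l with
  | nil => simp
  | cons j l ih =>
    have := h j List.mem_cons_self
    rw [CoxeterSystem.wordProd_cons, map_mul, Equiv.Perm.mul_apply, signedRep_simple,
      signedRefl_pos_iff (by omega), ih fun i hi => h i (List.mem_cons_of_mem _ hi)]

section Conjugates

variable {n : ℕ} {τ v : WB n}

theorem signedRep_apply_ne_of_isConj
    (hτ : ∀ x : ℤ, 1 ≤ x → x ≤ n → signedRep n τ x = x - (n + 1)) (hv : IsConj τ v)
    {x : ℤ} (h₁ : 1 ≤ x) (h₂ : x ≤ n) : signedRep n v x ≠ x := by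
  obtain ⟨c, rfl⟩ := isConj_iff.1 hv
  intro h
  rw [map_mul, map_mul, map_inv, Equiv.Perm.mul_apply, Equiv.Perm.mul_apply,
    ← Equiv.Perm.eq_inv_iff_eq] at h
  rw [← map_inv] at h
  obtain ⟨h₃, h₄⟩ := signedRep_apply_mem_Icc c⁻¹ (x := x) (by omega) h₂
  have h₀ : signedRep n c⁻¹ x ≠ 0 := by
    intro e
    rw [← signedRep_zero c⁻¹, (signedRep n c⁻¹).injective.eq_iff] at e
    omega
  generalize signedRep n c⁻¹ x = y at *
  rcases lt_or_gt_of_ne h₀ with hy | hy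
  · have := hτ (-y) (by omega) (by omega)
    rw [signedRep_neg] at this
    omega
  · have := hτ y (by omega) (by omega)
    omega

theorem exists_signedRep_apply_eq_neg_of_isConj
    (hτ : ∀ x : ℤ, 1 ≤ x → x ≤ n → signedRep n τ x = x - (n + 1)) (hv : IsConj τ v)
    (hn : Odd n) : ∃ x : ℤ, 0 < x ∧ signedRep n v x = -x := by
  obtain ⟨c, rfl⟩ := isConj_iff.1 hv
  obtain ⟨m, rfl⟩ := hn
  have h : signedRep (2 * m + 1) (c * τ * c⁻¹) (signedRep _ c (m + 1)) =
      -signedRep _ c (m + 1) := by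
    rw [← Equiv.Perm.mul_apply, ← map_mul, inv_mul_cancel_right, map_mul, Equiv.Perm.mul_apply,
      hτ _ (by omega) (by push_cast; omega), ← signedRep_neg]
    congr 1
    push_cast
    ring
  have h₀ : signedRep _ c ((m : ℤ) + 1) ≠ 0 := by
    intro e
    rw [← signedRep_zero c, (signedRep _ c).injective.eq_iff] at e
    omega
  rcases lt_or_gt_of_ne h₀ with hy | hy
  · refine ⟨-signedRep _ c (m + 1), by omega, ?_⟩
    rw [signedRep_neg, h]
  · exact ⟨_, hy, h⟩

theorem one_le_count_of_isConj
    (hτ : ∀ x : ℤ, 1 ≤ x → x ≤ n → signedRep n τ x = x - (n + 1)) {l : List (Fin n)}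
    (hl : IsConj τ ((csB n).wordProd l)) :
    (1 ≤ n → 1 ≤ (l.map Fin.val).count 0) ∧
    (∀ i, i + 1 < n → 1 ≤ (l.map Fin.val).count (i + 1) + (l.map Fin.val).count i) ∧
    (Odd n → 1 ≤ (l.map Fin.val).count (n - 1)) := by
  have aux : ∀ i, (l.map Fin.val).count i = 0 → ∀ j ∈ l, (j : ℕ) ≠ i := by
    intro i hi j hj e
    exact List.count_eq_zero.1 hi (List.mem_map.2 ⟨j, hj, e⟩)
  refine ⟨fun hn => ?_, fun i hi => ?_, fun hn => ?_⟩
  · by_contra! h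
    refine signedRep_apply_ne_of_isConj hτ hl (x := n) (by omega) le_rfl
      (signedRep_wordProd_apply_of_forall fun j hj => ?_)
    have := aux 0 (by omega) j hj
    apply signedRefl_apply_of_ne <;> omega
  · by_contra! h
    refine signedRep_apply_ne_of_isConj hτ hl (x := n - (i + 1)) (by omega) (by omega)
      (signedRep_wordProd_apply_of_forall fun j hj => ?_)
    have := aux (i + 1) (by omega) j hj
    have := aux i (by omega) j hj
    apply signedRefl_apply_of_ne <;> omega
  · by_contra! h
    obtain ⟨x, hx, e⟩ := exists_signedRep_apply_eq_neg_of_isConj hτ hl hn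
    have := (signedRep_wordProd_pos_iff (aux (n - 1) (by omega)) x).2 hx
    omega

theorem half_le_length_of_isConj
    (hτ : ∀ x : ℤ, 1 ≤ x → x ≤ n → signedRep n τ x = x - (n + 1)) (hv : IsConj τ v) :
    (n + 1) / 2 ≤ (csB n).length v := by
  obtain ⟨l, hl, rfl⟩ := (csB n).exists_isReduced v
  obtain ⟨h₀, h, -⟩ := one_le_count_of_isConj hτ hv
  rw [hl.eq, ← sum_count_map_val]
  exact half_le_sum_of_cover _ n h₀ h

theorem exists_word_of_isConj_of_length_le
    (hτ : ∀ x : ℤ, 1 ≤ x → x ≤ n → signedRep n τ x = x - (n + 1)) (hv : IsConj τ v)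
    (hlen : (csB n).length v ≤ (n + 1) / 2) :
    ∃ l : List (Fin n), l.Nodup ∧ (∀ j : Fin n, j ∈ l ↔ Odd ((j : ℕ) + 1)) ∧
      v = (csB n).wordProd l := by
  obtain ⟨l, hl, rfl⟩ := (csB n).exists_isReduced v
  obtain ⟨h₀, h, hodd⟩ := one_le_count_of_isConj hτ hv
  rw [hl.eq, ← sum_count_map_val] at hlen
  have key := eq_of_cover_of_sum_le_half (fun i => (l.map Fin.val).count i) n h₀ h hodd hlen
  have hcount : ∀ j : Fin n, l.count j = if Even (j : ℕ) then 1 else 0 := by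
    intro j
    rw [← key j j.2]
    exact (List.count_map_of_injective _ _ Fin.val_injective _).symm
  refine ⟨l, List.nodup_iff_count_le_one.2 fun j => ?_, fun j => ?_, rfl⟩
  · rw [hcount]
    split_ifs <;> omega
  · rw [← List.count_pos_iff, hcount, Nat.odd_add_one, Nat.not_odd_iff_even]
    split_ifs with he <;> simp [he]

end Conjugates

theorem signedRefl_apply_of_disjoint {n i j : ℕ} (hi : i < n) (hj : j < n) (hie : Even i)
    (hje : Even j) (hij : i ≠ j) {x : ℤ} (hx : x = n - j ∨ x = -(n - j) ∨ x = n - j - 1 ∨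
      x = -(n - j - 1)) : signedRefl (n - i) x = x := by
  rw [Nat.even_iff] at *
  apply signedRefl_apply_of_ne <;> omega

theorem signedRep_wordProd_of_mem {n : ℕ} {l : List (Fin n)} (hnd : l.Nodup)
    (hl : ∀ j ∈ l, Even (j : ℕ)) {j : Fin n} (hj : j ∈ l) {x : ℤ}
    (hx : x = n - j ∨ x = -(n - j) ∨ x = n - j - 1 ∨ x = -(n - j - 1)) :
    signedRep n ((csB n).wordProd l) x = signedRefl (n - j) x := by
  induction l with
  | nil => simp at hj
  | cons i l ih =>
    obtain ⟨hil, hnd⟩ := List.nodup_cons.1 hnd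
    have hle : ∀ j ∈ l, Even (j : ℕ) := fun j hj => hl j (List.mem_cons_of_mem _ hj)
    rw [CoxeterSystem.wordProd_cons, map_mul, Equiv.Perm.mul_apply, signedRep_simple]
    rcases List.mem_cons.1 hj with rfl | hj'
    · rw [signedRep_wordProd_apply_of_forall]
      intro k hk
      refine signedRefl_apply_of_disjoint k.2 j.2 (hle k hk) (hl j hj) ?_ hx
      rintro e
      exact hil (Fin.ext e ▸ hk)
    · rw [ih hnd hle hj']
      refine signedRefl_apply_of_disjoint i.2 j.2 (hl i List.mem_cons_self) (hl j hj) ?_ ?_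
      · rintro e
        exact hil (Fin.ext e ▸ hj')
      · have := j.2
        rw [signedRefl_apply]
        split_ifs <;> omega

/-- The odd permutation of `ℤ` that sends the cycles `x ↦ x - (n + 1)` (`1 ≤ x ≤ n`) to
transpositions of neighbours. -/
def foldPerm (n : ℕ) : Equiv.Perm ℤ where
  toFun x := if n < x ∨ x < -n ∨ x = 0 then x else if n + 1 ≤ 2 * x then 2 * x - n else
    if 0 < x then 2 * x - n - 1 else if 2 * x ≤ -(n + 1) then 2 * x + n else 2 * x + n + 1
  invFun y := if n < y ∨ y < -n ∨ y = 0 then y else if (y + n) % 2 = 0 then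
    (if 0 < y then (y + n) / 2 else (y - n) / 2) else
    if 0 < y then (y - n - 1) / 2 else (y + n + 1) / 2
  left_inv x := by
    simp only
    split_ifs <;> omega
  right_inv y := by
    simp only
    split_ifs <;> omega

theorem foldPerm_apply (n : ℕ) (x : ℤ) : foldPerm n x =
    if n < x ∨ x < -n ∨ x = 0 then x else if n + 1 ≤ 2 * x then 2 * x - n else
    if 0 < x then 2 * x - n - 1 else if 2 * x ≤ -(n + 1) then 2 * x + n else 2 * x + n + 1 :=
  rfl

theorem foldPerm_neg (n : ℕ) (x : ℤ) : foldPerm n (-x) = -foldPerm n x := by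
  rw [foldPerm_apply, foldPerm_apply]
  split_ifs <;> omega

theorem signedRep_wordProd_odd {n : ℕ} {l : List (Fin n)} (hnd : l.Nodup)
    (hl : ∀ j : Fin n, j ∈ l ↔ Odd ((j : ℕ) + 1)) {k : ℕ} (h₁ : 1 ≤ k) (h₂ : k ≤ n) :
    signedRep n ((csB n).wordProd l) k =
      if (n - k) % 2 = 0 then (if k = 1 then -1 else (k : ℤ) - 1) else k + 1 := by
  have hle : ∀ j ∈ l, Even (j : ℕ) := fun j hj => by
    have := (hl j).1 hj
    rwa [Nat.odd_add_one, Nat.not_odd_iff_even] at this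
  split_ifs with h h'
  · subst h'
    rw [signedRep_wordProd_of_mem hnd hle (j := ⟨n - 1, by omega⟩)
      ((hl _).2 (by rw [Nat.odd_iff]; dsimp; omega)) (by dsimp; omega), signedRefl_apply]
    dsimp
    split_ifs <;> omega
  · rw [signedRep_wordProd_of_mem hnd hle (j := ⟨n - k, by omega⟩)
      ((hl _).2 (by rw [Nat.odd_iff]; dsimp; omega)) (by dsimp; omega), signedRefl_apply]
    dsimp
    split_ifs <;> omega
  · rw [signedRep_wordProd_of_mem hnd hle (j := ⟨n - k - 1, by omega⟩)
      ((hl _).2 (by rw [Nat.odd_iff]; dsimp; omega)) (by dsimp; omega), signedRefl_apply]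
    dsimp
    split_ifs <;> omega

theorem isConj_wordProd_odd {n : ℕ} {τ : WB n}
    (hτ : ∀ x : ℤ, 1 ≤ x → x ≤ n → signedRep n τ x = x - (n + 1)) {l : List (Fin n)}
    (hnd : l.Nodup) (hl : ∀ j : Fin n, j ∈ l ↔ Odd ((j : ℕ) + 1)) :
    IsConj τ ((csB n).wordProd l) := by
  obtain ⟨w, hw⟩ := exists_signedRep_eq le_rfl (foldPerm n) (foldPerm_neg n)
    (fun x hx => by rw [foldPerm_apply, if_pos (Or.inl hx)])
  refine ⟨⟨w, w⁻¹, by simp, by simp⟩, ?_⟩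
  change w * τ = _ * w
  refine signedRep_ext fun x h₁ h₂ => ?_
  rw [map_mul, map_mul, Equiv.Perm.mul_apply, Equiv.Perm.mul_apply, hτ x h₁ h₂, hw]
  rcases le_or_gt (n + 1 : ℤ) (2 * x) with h | h
  · have hx : foldPerm n x = ((2 * x - n).toNat : ℕ) := by
      rw [foldPerm_apply, if_neg (by omega), if_pos h]
      omega
    rw [hx, signedRep_wordProd_odd hnd hl (by omega) (by omega), foldPerm_apply]
    split_ifs <;> omega
  · have hx : foldPerm n x = -((n + 1 - 2 * x).toNat : ℕ) := by
      rw [foldPerm_apply, if_neg (by omega), if_neg (by omega), if_pos (by omega)]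
      omega
    rw [hx, signedRep_neg, signedRep_wordProd_odd hnd hl (by omega) (by omega), foldPerm_apply]
    split_ifs <;> omega

theorem length_eq_half {n : ℕ} {l : List (Fin n)} (hnd : l.Nodup)
    (hl : ∀ j : Fin n, j ∈ l ↔ Odd ((j : ℕ) + 1)) : l.length = (n + 1) / 2 := by
  have h : (l.map Fin.val).toFinset = (Finset.range ((n + 1) / 2)).image (2 * ·) := by
    ext i
    simp only [List.mem_toFinset, List.mem_map, hl, Finset.mem_image, Finset.mem_range, Nat.odd_iff]
    constructor
    · rintro ⟨j, hj, rfl⟩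
      have := j.2
      exact ⟨j / 2, by omega, by omega⟩
    · rintro ⟨k, hk, rfl⟩
      exact ⟨⟨2 * k, by omega⟩, by dsimp; omega, rfl⟩
  rw [← List.length_map (f := Fin.val), ← List.toFinset_card_of_nodup
    (hnd.map Fin.val_injective), h, Finset.card_image_of_injective _ (fun a b e => by
      simpa using e), Finset.card_range]

/-- In the Weyl group of type `Cₙ` (`n ≥ 2`, Bourbaki labels; its
Coxeter system coincides with that of type `Bₙ`),
`w_{n,0}·w₀ = s_n·(s_{n−1}s_n)·(s_{n−2}s_{n−1}s_n)⋯(s_1 s_2 ⋯ s_n)`, and the set of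
minimal length elements of the conjugacy class of `w_{n,0}·w₀` equals the set of Coxeter
elements of the standard parabolic subgroup `W_J`, `J = {j ∈ {1,…,n} : j odd}`; in
particular the minimal length in this conjugacy class equals `⌈n/2⌉`. -/
theorem typeC_wn0_mul_w0 (n : ℕ) (hn : 2 ≤ n)
    (w₀ : WB n) (hw₀ : ∀ v : WB n, (csB n).length v ≤ (csB n).length w₀)
    (wₙ : WB n) (hwₙ : wₙ ∈ paraB n ⟨n - 1, by omega⟩)
    (hwₙmax : ∀ v ∈ paraB n ⟨n - 1, by omega⟩, (csB n).length v ≤ (csB n).length wₙ) :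
    wₙ * w₀ = ((List.range n).map fun t => segB n (n - t) n).prod ∧
    {w : WB n | IsConj (wₙ * w₀) w ∧
        ∀ v : WB n, IsConj (wₙ * w₀) v → (csB n).length w ≤ (csB n).length v}
      = {w : WB n | ∃ l : List (Fin n), l.Nodup ∧
          (∀ j : Fin n, j ∈ l ↔ Odd ((j : ℕ) + 1)) ∧ w = (csB n).wordProd l} ∧
    sInf {k : ℕ | ∃ v : WB n, IsConj (wₙ * w₀) v ∧ k = (csB n).length v}
      = (n + 1) / 2 := by
  have hprod : wₙ * w₀ = ((List.range n).map fun t => segB n (n - t) n).prod := by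
    refine signedRep_ext fun x h₁ h₂ => ?_
    rw [signedRep_prod_segB le_rfl h₁, if_pos h₂, map_mul, Equiv.Perm.mul_apply,
      signedRep_longest hw₀ h₁ h₂, signedRep_neg,
      signedRep_parabolic_longest (by omega) hwₙ hwₙmax h₁ h₂]
    ring
  have hτ : ∀ x : ℤ, 1 ≤ x → x ≤ n → signedRep n (wₙ * w₀) x = x - (n + 1) := by
    intro x h₁ h₂
    rw [hprod, signedRep_prod_segB le_rfl h₁, if_pos h₂]
  have hle : ∀ l : List (Fin n), l.Nodup → (∀ j : Fin n, j ∈ l ↔ Odd ((j : ℕ) + 1)) →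
      (csB n).length ((csB n).wordProd l) ≤ (n + 1) / 2 := fun l hnd hl =>
    ((csB n).length_wordProd_le l).trans (length_eq_half hnd hl).le
  obtain ⟨l, hnd, hl⟩ : ∃ l : List (Fin n), l.Nodup ∧ ∀ j : Fin n, j ∈ l ↔ Odd ((j : ℕ) + 1) :=
    ⟨(List.finRange n).filter fun j => Odd ((j : ℕ) + 1), (List.nodup_finRange n).filter _,
      by simp⟩
  have hc := isConj_wordProd_odd hτ hnd hl
  refine ⟨hprod, ?_, ?_⟩
  · ext w
    constructor
    · rintro ⟨hw, hmin⟩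
      exact exists_word_of_isConj_of_length_le hτ hw ((hmin _ hc).trans (hle l hnd hl))
    · rintro ⟨l', hnd', hl', rfl⟩
      exact ⟨isConj_wordProd_odd hτ hnd' hl',
        fun v hv => (hle l' hnd' hl').trans (half_le_length_of_isConj hτ hv)⟩
  · refine IsLeast.csInf_eq ⟨⟨_, hc, ?_⟩, ?_⟩
    · exact (half_le_length_of_isConj hτ hc).antisymm (hle l hnd hl)
    · rintro k ⟨v, hv, rfl⟩
      exact half_le_length_of_isConj hτ hv
end
end
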